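/- Let a, b, c be coprime positive integers with min{a,b,c} > 1. If max{a,b,c} > 5·10^27, then N(a,b,c) ≤ 3, i.e., the set of triples (x,y,z) of positive integers satisfying a^x + b^y = c^z has at most 3 elements. -/

import Mathlib

/-!
Suppose that there are four solutions, and let `M > 5 * 10 ^ 27` be the largest of the bases.

*Gap principle.* Elementary divisibility arguments with lifting the exponent (`gap_principle`, and
`equal_difference`, `equal_sum` for solutions that share a power of one base) show that some exponent
`n` occurring in the solutions satisfies `4 * M ≤ 9 * n ^ 2`; this is `bound_max`.

*Comparison.* Define `X` by writing the largest height `z * log c` as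
`X * log a * log b * log c`. All exponents are then at most `X * (log M) ^ 2`, and since `M > 5 * 10 ^ 27`,
the gap principle gives `log X ≥ 22` and `log M ≤ 3 * log X` (`numerics`).

*Bounded height.* Such a large `X` is impossible (`no_large_height`). Two of the bases, `p` and `q`,
are odd, and the third one, `E`, is even. If the power of `E` in the solution is large, then a large
power of `2` divides a difference `p ^ (2 * u) - q ^ (2 * v)`, contradicting the 2-adic lower bound
for linear forms in two logarithms `two_adic_bound`. Otherwise the power of `E` is at most the square
root of the largest term, so `u * log p - v * log q` is tiny, contradicting the archimedean
lower bound `real_bound`.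

*Linear forms in logarithms.* Both lower bounds come from interpolation determinants in the manner of
Laurent. The determinant with entries `(r * y + s * x) ^ k * (A ^ r * B ^ s) ^ l`, where the row
index `(k, l)` ranges over `K × L` and the column index selects a point `(r, s)`, is an
integer, and it is nonzero for suitable points by a zero estimate
(`zero_estimate`, `exists_det_ne_zero`). If `A ^ x` and `B ^ y` are close, the entries are close to
analytic functions of the single variable `ζ = r * y + s * x`, and the determinant is small by
`interp_det_le`, either 2-adically or archimedeanly. For suitable `K`, `L` (see `params`) this is a
contradiction.
-/

/-! ### Upper bound for interpolation determinants -/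

namespace ExpSum

/-- Weights below `N - 1`, where `N` is the number of indices, occur at most once each, so their sum is
at least `0 + 1 + ⋯ + (N - 1)`. -/
lemma weight_sum_ge {ι : Type*} [Fintype ι] [DecidableEq ι] (w : ι → ℕ)
    (h : ∀ i j, i ≠ j → w i = w j → Fintype.card ι ≤ w i + 1) :
    Fintype.card ι * (Fintype.card ι - 1) / 2 ≤ ∑ i, w i := by
  classical
  set N := Fintype.card ι with hN
  have h1 : ∀ t ∈ Finset.range (N - 1), (N - 1 - t) ≤ (Finset.univ.filter (fun i => t < w i)).card := by
    intro t ht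
    have ht' := Finset.mem_range.mp ht
    have hc := Finset.card_filter_add_card_filter_not (s := (Finset.univ : Finset ι)) (fun i => t < w i)
    have : (Finset.univ.filter (fun i => ¬ t < w i)).card ≤ (Finset.range (t+1)).card := by
      apply Finset.card_le_card_of_injOn w
      · intro i hi
        simp at hi ⊢
        omega
      · intro i hi j hj hij
        by_contra hne
        have := h i j hne hij
        simp at hi
        omega
    simp at this hc
    omega
  calc N * (N - 1) / 2 = ∑ t ∈ Finset.range N, t := by rw [Finset.sum_range_id]
    _ = ∑ t ∈ Finset.range N, (N - 1 - t) := by rw [Finset.sum_range_reflect (fun t => t)]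
    _ ≤ ∑ t ∈ Finset.range (N-1), (N - 1 - t) := by
        rcases N with _ | n
        · simp
        · rw [Finset.sum_range_succ]; simp
    _ ≤ ∑ t ∈ Finset.range (N-1), (Finset.univ.filter (fun i => t < w i)).card :=
        Finset.sum_le_sum h1
    _ = ∑ i, ((Finset.range (N-1)).filter (fun t => t < w i)).card := by
        simp only [Finset.card_filter]
        rw [Finset.sum_comm]
    _ ≤ ∑ i, w i := by
        apply Finset.sum_le_sum
        intro i _
        calc _ ≤ (Finset.range (w i)).card := by
              apply Finset.card_le_card
              intro t ht
              simp at ht ⊢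
              exact ht.2
          _ = w i := by simp

lemma norm_det_le {F : Type*} [NormedField F] {ι : Type*} [Fintype ι] [DecidableEq ι]
    (M : Matrix ι ι F) (c : ι → ℝ) (h : ∀ i j, ‖M i j‖ ≤ c i) :
    ‖M.det‖ ≤ (Fintype.card ι).factorial * ∏ i, c i := by
  rw [← Matrix.det_transpose, Matrix.det_apply]
  calc _ ≤ ∑ σ : Equiv.Perm ι, ‖Equiv.Perm.sign σ • ∏ i, M.transpose (σ i) i‖ := norm_sum_le _ _
    _ ≤ ∑ σ : Equiv.Perm ι, ∏ i, c i := by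
        apply Finset.sum_le_sum
        intro σ _
        have : ‖Equiv.Perm.sign σ • ∏ i, M.transpose (σ i) i‖ = ‖∏ i, M.transpose (σ i) i‖ := by
          rcases Int.units_eq_one_or (Equiv.Perm.sign σ) with h | h <;> simp [h]
        rw [this, norm_prod]
        exact Finset.prod_le_prod (fun _ _ => norm_nonneg _) (fun i _ => h i (σ i))
    _ = _ := by simp [Fintype.card_perm]

/-- The upper bound for interpolation determinants. The rows are the values at points `ζ i` of the disc
`‖ζ‖ ≤ r` of functions `∑ n < T, c j n * ζ ^ n`, up to errors `δ j i`; `C j` bounds the `j`-th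
function on the disc of radius `ρ * r`. The saving is `ρ ^ (N * (N - 1) / 2)`: expand the rows into
monomials, the error counting as one of weight `N`; the determinants in which a monomial occurs twice
vanish, so the weights of the others add up to at least `N * (N - 1) / 2`. This algebraic substitute
for the Schwarz lemma works over any normed field. -/
lemma interp_det_le {F : Type*} [NormedField F] {ι : Type*} [Fintype ι] [DecidableEq ι]
    (T : ℕ) (c : ι → ℕ → F) (ζ : ι → F) (δ : ι → ι → F) (r ρ : ℝ) (C : ι → ℝ)
    (hr : 0 ≤ r) (hρ : 1 ≤ ρ) (hζ : ∀ i, ‖ζ i‖ ≤ r)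
    (hC : ∀ j, ∑ n ∈ Finset.range T, ‖c j n‖ * (ρ * r) ^ n ≤ C j)
    (hδ : ∀ j i, ‖δ j i‖ * ρ ^ (Fintype.card ι) ≤ C j) :
    ‖(Matrix.of fun j i => ∑ n ∈ Finset.range T, c j n * ζ i ^ n + δ j i).det‖ *
      ρ ^ (Fintype.card ι * (Fintype.card ι - 1) / 2) ≤
      (Fintype.card ι).factorial * ∏ j, (2 * C j) := by
  classical
  set N := Fintype.card ι with hN
  have hρ0 : 0 < ρ := by linarith
  -- one index per monomial, and one more for the error term
  let g : ι → Option (Fin T) → ι → F := fun j o i => o.elim (δ j i) (fun n => c j n * ζ i ^ (n : ℕ))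
  let wt : Option (Fin T) → ℕ := fun o => o.elim N (fun n => n)
  let b : ι → Option (Fin T) → ℝ := fun j o => o.elim (C j) (fun n => ‖c j n‖ * (ρ * r) ^ (n : ℕ))
  have hC0 : ∀ j, 0 ≤ C j := fun j => le_trans (Finset.sum_nonneg (fun n _ => by positivity)) (hC j)
  have hb0 : ∀ j o, 0 ≤ b j o := by
    intro j o
    cases o with
    | none => exact hC0 j
    | some n => simp only [b, Option.elim]; positivity
  have hg : ∀ j o i, ‖g j o i‖ ≤ b j o / ρ ^ (wt o) := by
    intro j o i
    rw [le_div_iff₀ (by positivity)]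
    cases o with
    | none => exact hδ j i
    | some n =>
      simp only [g, b, wt, Option.elim, norm_mul, norm_pow, mul_pow]
      have : ‖ζ i‖ ^ (n:ℕ) ≤ r ^ (n:ℕ) := pow_le_pow_left₀ (norm_nonneg _) (hζ i) _
      calc _ = ‖c j n‖ * ρ ^ (n:ℕ) * ‖ζ i‖ ^ (n:ℕ) := by ring
        _ ≤ ‖c j n‖ * ρ ^ (n:ℕ) * r ^ (n:ℕ) := by gcongr
        _ = _ := by ring
  have hrow : (Matrix.of fun j i => ∑ n ∈ Finset.range T, c j n * ζ i ^ n + δ j i) =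
      fun j => ∑ o : Option (Fin T), g j o := by
    funext j i
    rw [Fintype.sum_option]
    simp only [Matrix.of_apply, g, Option.elim, Finset.sum_apply, Pi.add_apply]
    rw [Finset.sum_range]
    ring
  have hexp : (Matrix.of fun j i => ∑ n ∈ Finset.range T, c j n * ζ i ^ n + δ j i).det =
      ∑ f : ι → Option (Fin T), Matrix.det (fun j => g j (f j)) := by
    rw [hrow]
    exact (Matrix.detRowAlternating (R := F) (n := ι)).toMultilinearMap.map_sum g
  have hterm : ∀ f : ι → Option (Fin T), ‖Matrix.det (fun j => g j (f j))‖ * ρ ^ (N * (N - 1) / 2) ≤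
      N.factorial * ∏ j, b j (f j) := by
    intro f
    have hnn : (0:ℝ) ≤ N.factorial * ∏ j, b j (f j) :=
      mul_nonneg (by positivity) (Finset.prod_nonneg (fun j _ => hb0 j _))
    by_cases hdup : ∃ i j, i ≠ j ∧ ∃ n, f i = some n ∧ f j = some n
    · obtain ⟨i, j, hij, n, hi, hj⟩ := hdup
      have : Matrix.det (fun j => g j (f j)) = 0 := by
        -- two proportional rows
        have h1 : (fun j => g j (f j)) = Matrix.of fun k l =>
            (f k).elim (1:F) (fun n => c k n) *
            (f k).elim (δ k l) (fun n => ζ l ^ (n : ℕ)) := by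
          funext k l
          simp only [g, Matrix.of_apply]
          cases f k <;> simp
        rw [h1]
        refine (Matrix.det_mul_column (fun k => (f k).elim (1:F) (fun n => c k n)) (Matrix.of fun k l => (f k).elim (δ k l) (fun n => ζ l ^ (n : ℕ)))).trans ?_
        have : Matrix.det (Matrix.of fun k l => (f k).elim (δ k l) (fun n => ζ l ^ (n : ℕ))) = 0 := by
          apply Matrix.det_zero_of_row_eq hij
          funext l
          simp [hi, hj]
        exact mul_eq_zero_of_right _ this
      rw [this]; simpa using hnn
    · push Not at hdup
      have hw : N * (N - 1) / 2 ≤ ∑ j, wt (f j) := by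
        apply weight_sum_ge
        intro i j hij hw
        cases hi : f i with
        | none => simp only [wt, Option.elim]; omega
        | some n =>
          cases hj : f j with
          | none => rw [← hi, hw, hj]; simp only [wt, Option.elim]; omega
          | some m =>
            exfalso
            rw [hi, hj] at hw
            have : n = m := Fin.ext hw
            exact hdup i j hij n hi (this ▸ hj)
      have := norm_det_le (fun j => g j (f j)) (fun j => b j (f j) / ρ ^ (wt (f j)))
        (fun j i => hg j (f j) i)
      rw [Finset.prod_div_distrib, Finset.prod_pow_eq_pow_sum, mul_div_assoc',
        le_div_iff₀ (by positivity)] at this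
      refine le_trans ?_ this
      gcongr
  rw [hexp]
  calc _ ≤ (∑ f : ι → Option (Fin T), ‖Matrix.det (fun j => g j (f j))‖) * ρ ^ (N * (N - 1) / 2) := by
        gcongr; exact norm_sum_le _ _
    _ = ∑ f : ι → Option (Fin T), ‖Matrix.det (fun j => g j (f j))‖ * ρ ^ (N * (N - 1) / 2) := by
        rw [Finset.sum_mul]
    _ ≤ ∑ f : ι → Option (Fin T), N.factorial * ∏ j, b j (f j) := Finset.sum_le_sum fun f _ => hterm f
    _ = N.factorial * ∏ j, ∑ o, b j o := by
        rw [← Finset.mul_sum, Finset.prod_univ_sum, Fintype.piFinset_univ]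
    _ ≤ N.factorial * ∏ j, (2 * C j) := by
        gcongr with j
        · intro j _; exact Finset.sum_nonneg fun o _ => hb0 j o
        · rw [Fintype.sum_option]
          have := hC j
          rw [Finset.sum_range] at this
          simp only [b, Option.elim]
          linarith

end ExpSum

/-! ### Zero estimate -/

namespace ExpSum
open Polynomial

/-- Vectors `v p` on which no nonzero linear form vanishes span the space, hence contain a basis. -/
lemma exists_minor {k ι P : Type*} [Field k] [Fintype ι] [DecidableEq ι] (v : P → ι → k)
    (h : ∀ d : ι → k, (∀ p, ∑ j, d j * v p j = 0) → d = 0) :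
    ∃ e : ι → P, (Matrix.of fun j i => v (e i) j).det ≠ 0 := by
  have hspan : Submodule.span k (Set.range v) = ⊤ := by
    by_contra hne
    obtain ⟨f, hf, hle⟩ := Submodule.exists_le_ker_of_lt_top _ (lt_top_iff_ne_top.mpr hne)
    apply hf
    have := h (fun j => f (Pi.single j 1)) (fun p => by
      have h1 : f (v p) = 0 := hle (Submodule.subset_span ⟨p, rfl⟩)
      rw [LinearMap.pi_apply_eq_sum_univ] at h1
      rw [← h1]
      refine Finset.sum_congr rfl fun j _ => ?_
      rw [smul_eq_mul, mul_comm]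
      congr 2
      funext i
      simp [Pi.single_apply, eq_comm])
    ext j
    simpa using congrFun this j
  obtain ⟨f, hf, -, hli⟩ := Submodule.exists_fun_fin_finrank_span_eq k (Set.range v)
  have hcard : Module.finrank k (Submodule.span k (Set.range v)) = Fintype.card ι := by
    rw [hspan]; simp
  let φ : ι ≃ Fin (Module.finrank k (Submodule.span k (Set.range v))) :=
    Fintype.equivOfCardEq (by simp [hcard])
  choose e he using hf
  refine ⟨fun i => e (φ i), ?_⟩
  have hli2 : LinearIndependent k (fun i => f (φ i)) := hli.comp _ φ.injective
  have h2 : IsUnit (Matrix.of fun i j => f (φ i) j) := by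
    rw [← Matrix.linearIndependent_rows_iff_isUnit]
    exact hli2
  rw [← Matrix.det_transpose]
  have := (Matrix.isUnit_iff_isUnit_det _).mp h2
  convert this.ne_zero using 2
  ext i j
  simp [he]

/-- A nonzero polynomial of degree `< K` in `ζ` and `< L` in `α` cannot vanish at all sums of two
points `(ζ p, α p)` of a set `S` with at least `K * L` elements, if `ζ` and `α` are injective on `S`
(addition in the first, multiplication in the second coordinate). Writing the polynomial as
`∑ P_l(ζ) α ^ l`, points `e i` can be chosen such that the one-variable polynomial
`det (P_l(X + ζ (e i)) * α (e i) ^ l)` is nonzero, of degree at most `L * (K - 1)`; but it vanishes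
at all the values `ζ q`. -/
lemma zero_estimate {S : Type*} [Fintype S] (K L : ℕ) (hK : 0 < K) (hL : 0 < L)
    (ζ α : S → ℚ) (hζ : Function.Injective ζ) (hα : Function.Injective α) (hα0 : ∀ p, α p ≠ 0)
    (hcard : K * L ≤ Fintype.card S) (d : Fin K × Fin L → ℚ)
    (h : ∀ p q, ∑ j, d j * ((ζ p + ζ q) ^ (j.1 : ℕ) * (α p * α q) ^ (j.2 : ℕ)) = 0) : d = 0 := by
  classical
  by_contra hd
  let P : Fin L → ℚ[X] := fun l => ∑ k : Fin K, C (d (k, l)) * X ^ (k : ℕ)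
  have hPdeg : ∀ l, (P l).natDegree ≤ K - 1 := by
    intro l
    apply natDegree_sum_le_of_forall_le
    intro k _
    exact (natDegree_C_mul_X_pow_le _ _).trans (by have := k.2; omega)
  have hPev : ∀ p q, ∑ l, (P l).eval (ζ p + ζ q) * (α p * α q) ^ (l : ℕ) = 0 := by
    intro p q
    rw [← h p q, Fintype.sum_prod_type_right]
    refine Finset.sum_congr rfl fun l _ => ?_
    simp only [P, eval_finsetSum, eval_mul, eval_C, eval_pow, eval_X, Finset.sum_mul]
    exact Finset.sum_congr rfl fun k _ => by ring
  let J := {l : Fin L // P l ≠ 0}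
  have hJ : Nonempty J := by
    by_contra hJ
    apply hd
    funext ⟨k, l⟩
    have hl : P l = 0 := by
      by_contra h0
      exact hJ ⟨⟨l, h0⟩⟩
    have := congrArg (fun p => coeff p (k : ℕ)) hl
    simpa [P, finsetSum_coeff, coeff_C_mul, coeff_X_pow, Fin.val_inj] using this
  have hJL : Fintype.card J ≤ L := by
    exact (Fintype.card_subtype_le (fun l : Fin L => P l ≠ 0)).trans (by simp)
  have hLS : L ≤ Fintype.card S := le_trans (Nat.le_mul_of_pos_left L hK) hcard
  -- points at which the powers of `α` with exponents in `J` form an invertible matrix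
  obtain ⟨e, he⟩ := exists_minor (k := ℚ) (ι := J) (fun (p : S) (l : J) => α p ^ (l.1 : ℕ)) (by
    intro d' hd'
    let G : ℚ[X] := ∑ l : J, C (d' l) * X ^ (l.1 : ℕ)
    have hG : G = 0 := by
      apply eq_zero_of_natDegree_lt_card_of_eval_eq_zero G hα
      · intro p
        rw [← hd' p]
        simp [G, eval_finsetSum]
      · refine lt_of_le_of_lt (b := L - 1) ?_ (by omega)
        apply natDegree_sum_le_of_forall_le
        intro l _
        exact (natDegree_C_mul_X_pow_le _ _).trans (by have := l.1.2; omega)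
    funext l
    have := congrArg (fun p => coeff p (l.1 : ℕ)) hG
    simp only [G, finsetSum_coeff, coeff_C_mul, coeff_X_pow, coeff_zero] at this
    rw [Finset.sum_eq_single l] at this
    · simpa using this
    · intro b _ hb
      rw [if_neg, mul_zero]
      exact fun h => hb (Subtype.ext (Fin.ext h.symm))
    · simp)
  let M : Matrix J J ℚ[X] := Matrix.of fun l i =>
    (P l.1).comp (X + C (ζ (e i))) * C (α (e i) ^ (l.1 : ℕ))
  let D : ℕ := ∑ l : J, (P l.1).natDegree
  have hMlc : ∀ l i, (M l i).leadingCoeff = (P l.1).leadingCoeff * α (e i) ^ (l.1 : ℕ) := by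
    intro l i
    simp only [M, Matrix.of_apply, leadingCoeff_mul, leadingCoeff_C]
    rw [leadingCoeff_comp (by simp)]
    simp
  have hM0 : ∀ l i, M l i ≠ 0 := by
    intro l i
    rw [← leadingCoeff_ne_zero, hMlc]
    exact mul_ne_zero (leadingCoeff_ne_zero.mpr l.2) (pow_ne_zero _ (hα0 _))
  have hMdeg : ∀ l i, (M l i).natDegree = (P l.1).natDegree := by
    intro l i
    simp only [M, Matrix.of_apply]
    rw [natDegree_mul_C (pow_ne_zero _ (hα0 _)), natDegree_comp]
    simp
  have hprod : ∀ σ : Equiv.Perm J, (∏ i, M (σ i) i).natDegree = D := by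
    intro σ
    rw [natDegree_prod _ _ (fun i _ => hM0 _ _)]
    simp only [hMdeg]
    exact Equiv.sum_comp σ (fun l : J => (P l.1).natDegree)
  have hcoeff : M.det.coeff D = (∏ l : J, (P l.1).leadingCoeff) *
      (Matrix.of fun (j : J) i => α (e i) ^ (j.1 : ℕ)).det := by
    rw [Matrix.det_apply', Matrix.det_apply', finsetSum_coeff, Finset.mul_sum]
    refine Finset.sum_congr rfl fun σ _ => ?_
    rw [← Polynomial.C_eq_intCast, coeff_C_mul]
    have : (∏ i, M (σ i) i).coeff D = ∏ i, ((P (σ i).1).leadingCoeff * α (e i) ^ ((σ i).1 : ℕ)) := by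
      conv_lhs => rw [← hprod σ]
      change leadingCoeff _ = _
      rw [leadingCoeff_prod]
      simp only [hMlc]
    rw [this, Finset.prod_mul_distrib, Equiv.prod_comp σ (fun l : J => (P l.1).leadingCoeff)]
    simp only [Matrix.of_apply]
    ring
  have hdet : M.det ≠ 0 := by
    intro h0
    rw [h0, coeff_zero] at hcoeff
    exact mul_ne_zero (Finset.prod_ne_zero_iff.mpr fun l _ => leadingCoeff_ne_zero.mpr l.2) he
      hcoeff.symm
  apply hdet
  apply eq_zero_of_natDegree_lt_card_of_eval_eq_zero _ hζ
  · intro q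
    rw [← coe_evalRingHom, RingHom.map_det]
    rw [← Matrix.exists_vecMul_eq_zero_iff]
    refine ⟨fun l : J => α q ^ (l.1 : ℕ), ?_, ?_⟩
    · intro h0
      obtain ⟨l⟩ := hJ
      exact pow_ne_zero _ (hα0 q) (congrFun h0 l)
    · funext i
      simp only [Matrix.vecMul, dotProduct, Pi.zero_apply, RingHom.mapMatrix_apply, Matrix.map_apply]
      rw [← hPev (e i) q]
      rw [← Finset.sum_filter_of_ne (p := fun l => P l ≠ 0), Finset.sum_subtype _ (p := fun l => P l ≠ 0) (by simp)]
      · refine Finset.sum_congr rfl fun l _ => ?_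
        simp only [M, Matrix.of_apply, coe_evalRingHom, eval_mul, eval_comp, eval_add, eval_X,
          eval_C, eval_pow]
        rw [add_comm (ζ q)]
        ring
      · intro l _ hl h0
        apply hl
        simp [h0]
  · have h1 : M.det.natDegree ≤ D := by
      rw [Matrix.det_apply]
      apply natDegree_sum_le_of_forall_le
      intro σ _
      refine le_trans (natDegree_smul_le _ _) (hprod σ).le
    have h2 : D ≤ Fintype.card J * (K - 1) := by
      calc D ≤ ∑ l : J, (K - 1) := Finset.sum_le_sum fun l _ => hPdeg l.1
        _ = _ := by simp
    have h3 : Fintype.card J * (K - 1) ≤ L * (K - 1) := Nat.mul_le_mul_right _ hJL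
    have h4 : L * (K - 1) < K * L := by
      rw [mul_comm K L]; exact Nat.mul_lt_mul_of_pos_left (by omega) hL
    omega

end ExpSum

/-! ### A nonvanishing interpolation determinant -/

namespace ExpSum

lemma pow_mul_pow_inj {A B : ℕ} (hA : 2 ≤ A) (hB : 2 ≤ B) (hAB : Nat.Coprime A B)
    {r s r' s' : ℕ} (h : A ^ r * B ^ s = A ^ r' * B ^ s') : r = r' ∧ s = s' := by
  have key : ∀ {A B : ℕ}, 2 ≤ A → Nat.Coprime A B → ∀ {r s r' s' : ℕ},
      A ^ r * B ^ s = A ^ r' * B ^ s' → r ≤ r' := by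
    intro A B hA hAB r s r' s' h
    have h1 : A ^ r ∣ A ^ r' * B ^ s' := ⟨_, h.symm⟩
    have h2 : A ^ r ∣ A ^ r' := (Nat.Coprime.pow r s' hAB).dvd_of_dvd_mul_right h1
    exact (Nat.pow_dvd_pow_iff_le_right hA).mp h2
  refine ⟨le_antisymm (key hA hAB h) (key hA hAB h.symm), ?_⟩
  rw [mul_comm, mul_comm (A ^ r')] at h
  exact le_antisymm (key hB hAB.symm h) (key hB hAB.symm h.symm)

lemma lin_inj {x y r s r' s' R : ℕ} (hx : 0 < x) (hxy : Nat.Coprime x y) (hr : r < R) (hr' : r' < R)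
    (hR : R ≤ x) (h : r * y + s * x = r' * y + s' * x) : r = r' ∧ s = s' := by
  have key : ∀ {r s r' s' : ℕ}, r' < R → r ≤ r' → r * y + s * x = r' * y + s' * x → r = r' := by
    intro r s r' s' hr' hle h
    obtain ⟨t, rfl⟩ := Nat.exists_eq_add_of_le hle
    have h1 : x ∣ t * y := by
      have : s * x = t * y + s' * x := by nlinarith
      exact (Nat.dvd_add_left (Dvd.intro_left s' rfl)).mp ⟨s, by rw [← this]; ring⟩
    have h2 : x ∣ t := hxy.dvd_of_dvd_mul_right h1
    have : t = 0 := Nat.eq_zero_of_dvd_of_lt h2 (by omega)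
    omega
  have hrr : r = r' := by
    rcases le_total r r' with hle | hle
    · exact key hr' hle h
    · exact (key hr hle h.symm).symm
  subst hrr
  exact ⟨rfl, Nat.eq_of_mul_eq_mul_right hx (Nat.add_left_cancel h)⟩

/-- The zero estimate for the points `ζ = r * y + s * x`, `α = A ^ r * B ^ s` with `r < R`, `s < S`.
Either of the conditions `R ≤ x`, `S ≤ y` makes `ζ` injective, as `x` and `y` are coprime. -/
lemma exists_det_ne_zero (A B x y K L R S : ℕ) (hA : 2 ≤ A) (hB : 2 ≤ B) (hAB : Nat.Coprime A B)
    (hx : 0 < x) (hy : 0 < y) (hxy : Nat.Coprime x y) (hK : 0 < K) (hL : 0 < L)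
    (hRS : K * L ≤ R * S) (hns : R ≤ x ∨ S ≤ y) :
    ∃ r s : Fin K × Fin L → ℕ, (∀ i, r i ≤ 2 * R) ∧ (∀ i, s i ≤ 2 * S) ∧
      (Matrix.of fun j i : Fin K × Fin L => (((r i * y + s i * x : ℕ) : ℤ)) ^ (j.1 : ℕ) *
        ((A : ℤ) ^ r i * (B : ℤ) ^ s i) ^ (j.2 : ℕ)).det ≠ 0 := by
  let ζ : Fin R × Fin S → ℚ := fun p => ((p.1 * y + p.2 * x : ℕ) : ℚ)
  let α : Fin R × Fin S → ℚ := fun p => ((A ^ (p.1 : ℕ) * B ^ (p.2 : ℕ) : ℕ) : ℚ)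
  have hζ : Function.Injective ζ := by
    rintro ⟨r, s⟩ ⟨r', s'⟩ h
    have h' : (r : ℕ) * y + s * x = r' * y + s' * x := Nat.cast_injective (R := ℚ) h
    have : (r : ℕ) = r' ∧ (s : ℕ) = s' := by
      rcases hns with hns | hns
      · exact lin_inj hx hxy r.2 r'.2 hns h'
      · have := lin_inj hy hxy.symm s.2 s'.2 hns (by rw [add_comm, h', add_comm])
        exact ⟨this.2, this.1⟩
    exact Prod.ext (Fin.ext this.1) (Fin.ext this.2)
  have hα : Function.Injective α := by
    rintro ⟨r, s⟩ ⟨r', s'⟩ h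
    have h' : A ^ (r : ℕ) * B ^ (s : ℕ) = A ^ (r' : ℕ) * B ^ (s' : ℕ) := Nat.cast_injective (R := ℚ) h
    have := pow_mul_pow_inj hA hB hAB h'
    exact Prod.ext (Fin.ext this.1) (Fin.ext this.2)
  have hα0 : ∀ p, α p ≠ 0 := by
    intro p
    have : 0 < A ^ (p.1 : ℕ) * B ^ (p.2 : ℕ) := by positivity
    exact Nat.cast_ne_zero.mpr this.ne'
  obtain ⟨e, he⟩ := exists_minor (k := ℚ) (ι := Fin K × Fin L)
    (fun (p : (Fin R × Fin S) × (Fin R × Fin S)) j =>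
      (ζ p.1 + ζ p.2) ^ (j.1 : ℕ) * (α p.1 * α p.2) ^ (j.2 : ℕ))
    (fun d hd => zero_estimate K L hK hL ζ α hζ hα hα0 (by simpa using hRS) d
      (fun p q => hd (p, q)))
  refine ⟨fun i => (e i).1.1 + (e i).2.1, fun i => (e i).1.2 + (e i).2.2, ?_, ?_, ?_⟩
  · intro i; have := (e i).1.1.2; have := (e i).2.1.2; beta_reduce; omega
  · intro i; have := (e i).1.2.2; have := (e i).2.2.2; beta_reduce; omega
  · intro h0
    apply he
    have := congrArg (Int.castRingHom ℚ) h0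
    rw [RingHom.map_det, map_zero] at this
    rw [← this]
    congr 1
    ext j i
    simp only [Matrix.of_apply, RingHom.mapMatrix_apply, Matrix.map_apply, eq_intCast, ζ, α]
    push_cast
    ring

end ExpSum

/-! ### The 2-adic interpolation determinant -/

namespace ExpSum
open Finset Polynomial

lemma two_pow_dvd_pow_sub_one {U : ℤ} (hU : Odd U) (n : ℕ) : (2 : ℤ) ^ n ∣ U ^ (2 ^ n) - 1 := by
  induction n with
  | zero => simp
  | succ n ih =>
    have h2 : (2 : ℤ) ∣ U ^ (2 ^ n) + 1 := (Odd.add_odd (hU.pow) odd_one).two_dvd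
    have : U ^ (2 ^ (n + 1)) - 1 = (U ^ (2 ^ n) - 1) * (U ^ (2 ^ n) + 1) := by
      rw [pow_succ, pow_mul]; ring
    rw [this, pow_succ]
    exact mul_dvd_mul ih h2

/-- If `A ^ x` and `B ^ y` are congruent modulo `2 ^ Z`, then `A ≡ α ^ y` and `B ≡ α ^ x` for a common
root `α`, which exists because `y` is odd and the odd residues form a `2`-group. -/
lemma exists_root (A B : ℤ) (x y Z : ℕ) (hA : (8 : ℤ) ∣ A - 1) (hB : (8 : ℤ) ∣ B - 1) (hy : Odd y)
    (hdvd : (2 : ℤ) ^ Z ∣ A ^ x - B ^ y) :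
    ∃ α : ℤ, 8 ∣ α - 1 ∧ ∀ r s : ℕ, (2 : ℤ) ^ Z ∣ A ^ r * B ^ s - α ^ (r * y + s * x) := by
  have odd_of : ∀ U : ℤ, (8 : ℤ) ∣ U - 1 → Odd U := by
    rintro U ⟨k, hk⟩; exact ⟨4 * k, by linarith⟩
  obtain ⟨t, m, ht⟩ : ∃ t m : ℕ, t * y = 1 + m * 2 ^ Z := by
    rcases Nat.eq_zero_or_pos Z with rfl | hZ
    · refine ⟨1, y - 1, ?_⟩
      have := hy.pos; simp; omega
    · have hc : Nat.Coprime y (2 ^ Z) := (Nat.coprime_two_right.mpr hy).pow_right Z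
      obtain ⟨t, ht⟩ := Nat.exists_mul_mod_eq_one_of_coprime hc (Nat.one_lt_two_pow hZ.ne')
      refine ⟨t, t * y / 2 ^ Z, ?_⟩
      have := Nat.mod_add_div (t * y) (2 ^ Z)
      rw [mul_comm t y] at this ⊢
      rw [ht.2] at this
      linarith [mul_comm (2 ^ Z) (y * t / 2 ^ Z)]
  have hpow : ∀ U : ℤ, Odd U → U ^ (t * y) ≡ U [ZMOD 2 ^ Z] := by
    intro U hU
    have h1 : U ^ (2 ^ Z) ≡ 1 [ZMOD 2 ^ Z] :=
      (Int.modEq_iff_dvd.mpr (two_pow_dvd_pow_sub_one hU Z)).symm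
    rw [ht, pow_add, pow_one, mul_comm m, pow_mul]
    simpa using (h1.pow m).mul_left U
  have hAodd := odd_of A hA
  have hBodd := odd_of B hB
  have hAB : A ^ x ≡ B ^ y [ZMOD 2 ^ Z] := (Int.modEq_iff_dvd.mpr hdvd).symm
  refine ⟨A ^ t, ?_, ?_⟩
  · exact hA.trans (sub_one_dvd_pow_sub_one A t)
  · intro r s
    have hAr : (A ^ t) ^ (r * y) ≡ A ^ r [ZMOD 2 ^ Z] := by
      have := (hpow A hAodd).pow r
      rwa [← pow_mul, mul_assoc, mul_comm y r, pow_mul] at this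
    have hBs : (A ^ t) ^ (s * x) ≡ B ^ s [ZMOD 2 ^ Z] := by
      have h1 : A ^ (t * x) ≡ B ^ (t * y) [ZMOD 2 ^ Z] := by
        have := hAB.pow t
        rwa [← pow_mul, ← pow_mul, mul_comm x t, mul_comm y t] at this
      have := (h1.trans (hpow B hBodd)).pow s
      rwa [← pow_mul, mul_assoc, mul_comm x s, pow_mul] at this
    rw [pow_add]
    exact Int.modEq_iff_dvd.mp (hAr.mul hBs)

lemma binom_trunc (β : ℤ) (ζ N : ℕ) :
    (8 : ℤ) ^ N ∣ (1 + 8 * β) ^ ζ - ∑ m ∈ range N, (ζ.choose m : ℤ) * (8 * β) ^ m := by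
  have h1 : (1 + 8 * β) ^ ζ = ∑ m ∈ range (N + (ζ + 1)), (ζ.choose m : ℤ) * (8 * β) ^ m := by
    rw [add_comm (1 : ℤ), add_pow]
    rw [← Finset.sum_subset (s₁ := range (ζ + 1)) (s₂ := range (N + (ζ + 1)))]
    · apply Finset.sum_congr rfl; intro i _; ring
    · intro i; simp; omega
    · intro i _ hi
      simp at hi
      rw [Nat.choose_eq_zero_of_lt (by omega)]; simp
  rw [h1, Finset.sum_range_add, add_sub_cancel_left]
  apply Finset.dvd_sum
  intro i _
  rw [pow_add, mul_pow 8 β N]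
  exact ⟨ζ.choose (N + i) * β ^ N * (8 * β) ^ i, by ring⟩

lemma norm_eight_pow_div_factorial (m : ℕ) :
    ‖((8 : ℚ_[2]) ^ m / (m.factorial : ℚ_[2]))‖ ≤ (1 / 4 : ℝ) ^ m := by
  have hm : (m.factorial : ℚ_[2]) ≠ 0 := by exact_mod_cast m.factorial_ne_zero
  have h8 : ‖(8 : ℚ_[2])‖ = 1 / 8 := by
    have : (8 : ℚ_[2]) = (2 : ℕ) ^ 3 := by norm_num
    rw [this, norm_pow, Padic.norm_p]; norm_num
  rw [norm_div, norm_pow, h8]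
  have hv : padicValNat 2 m.factorial ≤ m := by
    have := sub_one_mul_padicValNat_factorial (p := 2) m
    omega
  have hf : ‖(m.factorial : ℚ_[2])‖ = (2 : ℝ) ^ (-(padicValNat 2 m.factorial : ℤ)) := by
    rw [Padic.norm_eq_zpow_neg_valuation hm]; simp
  have hf2 : (1 / 2 : ℝ) ^ m ≤ ‖(m.factorial : ℚ_[2])‖ := by
    rw [hf, zpow_neg, zpow_natCast, one_div, inv_pow]
    gcongr
    norm_num
  rw [div_le_iff₀ (norm_pos_iff.mpr hm)]
  calc (1 / 8 : ℝ) ^ m = (1 / 4) ^ m * (1 / 2) ^ m := by rw [← mul_pow]; norm_num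
    _ ≤ _ := by gcongr

/-- The binomial series of `(1 + 8 * β) ^ ζ`, truncated after `N` terms, as a polynomial in `ζ`. -/
noncomputable def binPoly (N : ℕ) (β : ℤ) : ℚ_[2][X] :=
  ∑ m ∈ range N, C ((8 : ℚ_[2]) ^ m / (m.factorial : ℚ_[2]) * (β : ℚ_[2]) ^ m) * descPochhammer ℚ_[2] m

lemma binPoly_eval (N : ℕ) (β : ℤ) (ζ : ℕ) :
    (binPoly N β).eval (ζ : ℚ_[2]) =
      ((∑ m ∈ range N, (ζ.choose m : ℤ) * (8 * β) ^ m : ℤ) : ℚ_[2]) := by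
  rw [binPoly, eval_finsetSum, Int.cast_sum]
  apply Finset.sum_congr rfl
  intro m _
  have hm : (m.factorial : ℚ_[2]) ≠ 0 := by exact_mod_cast m.factorial_ne_zero
  rw [eval_mul, eval_C, descPochhammer_eval_eq_descFactorial, Nat.descFactorial_eq_factorial_mul_choose]
  push_cast
  field_simp
  ring

lemma descPochhammer_coeff_norm (m n : ℕ) : ‖(descPochhammer ℚ_[2] m).coeff n‖ ≤ 1 := by
  rw [← descPochhammer_map (Int.castRingHom ℚ_[2]), coeff_map]
  exact Padic.norm_int_le_one _

lemma binPoly_coeff_norm (N : ℕ) (β : ℤ) (n : ℕ) : ‖(binPoly N β).coeff n‖ ≤ (1 / 4 : ℝ) ^ n := by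
  rw [binPoly, finsetSum_coeff]
  apply IsUltrametricDist.norm_sum_le_of_forall_le_of_nonneg (by positivity)
  intro m _
  rw [coeff_C_mul]
  rcases lt_or_ge m n with h | h
  · rw [coeff_eq_zero_of_natDegree_lt (by rw [descPochhammer_natDegree]; exact h)]
    simp
  · rw [norm_mul, norm_mul, norm_pow]
    have h1 := norm_eight_pow_div_factorial m
    have h2 : ‖(β : ℚ_[2])‖ ^ m ≤ 1 := pow_le_one₀ (norm_nonneg _) (Padic.norm_int_le_one _)
    have h3 := descPochhammer_coeff_norm m n
    calc _ ≤ (1 / 4 : ℝ) ^ m * 1 * 1 := by gcongr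
      _ ≤ (1 / 4 : ℝ) ^ n := by
        rw [mul_one, mul_one]
        exact pow_le_pow_of_le_one (by norm_num) (by norm_num) h

lemma binPoly_natDegree (N : ℕ) (β : ℤ) : (binPoly N β).natDegree ≤ N := by
  apply natDegree_sum_le_of_forall_le
  intro m hm
  refine (natDegree_C_mul_le _ _).trans ?_
  rw [descPochhammer_natDegree]
  exact (mem_range.mp hm).le

/-- The Liouville inequality: a nonzero integer cannot be small for both absolute values. -/
lemma one_le_abs_mul_norm (D : ℤ) (hD : D ≠ 0) : 1 ≤ |(D : ℝ)| * ‖(D : ℚ_[2])‖ := by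
  have hD' : (D : ℚ_[2]) ≠ 0 := by exact_mod_cast hD
  rw [Padic.norm_eq_zpow_neg_valuation hD', Padic.valuation_intCast, zpow_neg, zpow_natCast]
  have h1 : (2 : ℤ) ^ padicValInt 2 D ∣ D := by exact_mod_cast padicValInt_dvd D
  have h2 : (2 : ℤ) ^ padicValInt 2 D ≤ |D| :=
    Int.le_of_dvd (abs_pos.mpr hD) ((dvd_abs _ _).mpr h1)
  have h3 : (2 : ℝ) ^ padicValInt 2 D ≤ |(D : ℝ)| := by exact_mod_cast h2
  rw [← div_eq_mul_inv, one_le_div (by positivity)]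
  exact_mod_cast h3

/-- With the common root `α` of `exists_root`, the entries of the determinant `D` are congruent to
`ζ ^ k * (α ^ l) ^ ζ`, hence 2-adically close to power series in `ζ` that converge on a disc of
radius 4 (the binomial series). So `D` is 2-adically small, and being a nonzero integer it is large
in the usual absolute value. -/
lemma two_adic_core (A B : ℤ) (x y Z K L : ℕ) (hA : (8 : ℤ) ∣ A - 1) (hB : (8 : ℤ) ∣ B - 1)
    (hy : Odd y) (hZ : 2 * (K * L) ≤ Z) (hdvd : (2 : ℤ) ^ Z ∣ A ^ x - B ^ y)
    (r s : Fin K × Fin L → ℕ) (D : ℤ)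
    (hDdef : D = (Matrix.of fun j i : Fin K × Fin L => (((r i * y + s i * x : ℕ) : ℤ)) ^ (j.1 : ℕ) *
        (A ^ r i * B ^ s i) ^ (j.2 : ℕ)).det) (hD : D ≠ 0) :
    (4 : ℝ) ^ (K * L * (K * L - 1) / 2) ≤
      |(D : ℝ)| * ((K * L).factorial * ∏ j : Fin K × Fin L, (2 * ((K * L + K) * 4 ^ (j.1 : ℕ)))) := by
  obtain ⟨α, hα, hroot⟩ := exists_root A B x y Z hA hB hy hdvd
  have hα' : ∀ l : ℕ, ∃ β : ℤ, α ^ l = 1 + 8 * β := by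
    intro l
    obtain ⟨β, hβ⟩ := hα.trans (sub_one_dvd_pow_sub_one α l)
    exact ⟨β, by linarith⟩
  choose β hβ using hα'
  set N := K * L with hN
  have hcard : Fintype.card (Fin K × Fin L) = N := by simp [hN]
  let ζ : Fin K × Fin L → ℕ := fun i => r i * y + s i * x
  let P : Fin K × Fin L → ℚ_[2][X] := fun j => X ^ (j.1 : ℕ) * binPoly N (β j.2)
  let δ : Fin K × Fin L → Fin K × Fin L → ℤ := fun j i => (ζ i : ℤ) ^ (j.1 : ℕ) *
    ((A ^ r i * B ^ s i) ^ (j.2 : ℕ) - ∑ m ∈ range N, ((ζ i).choose m : ℤ) * (8 * β j.2) ^ m)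
  have hδ : ∀ j i, (2 : ℤ) ^ (2 * N) ∣ δ j i := by
    intro j i
    apply Dvd.dvd.mul_left
    have h1 : (2 : ℤ) ^ (2 * N) ∣ (A ^ r i * B ^ s i) ^ (j.2 : ℕ) - (α ^ (ζ i)) ^ (j.2 : ℕ) :=
      ((pow_dvd_pow 2 hZ).trans (hroot (r i) (s i))).trans (sub_dvd_pow_sub_pow _ _ _)
    have h2 : (2 : ℤ) ^ (2 * N) ∣ (α ^ (ζ i)) ^ (j.2 : ℕ) -
        ∑ m ∈ range N, ((ζ i).choose m : ℤ) * (8 * β j.2) ^ m := by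
      rw [← pow_mul, mul_comm (ζ i), pow_mul α, hβ]
      refine dvd_trans ?_ (binom_trunc (β j.2) (ζ i) N)
      have : (8 : ℤ) ^ N = 2 ^ (3 * N) := by rw [pow_mul (2 : ℤ)]; norm_num
      rw [this]
      exact pow_dvd_pow 2 (by omega)
    have := dvd_add h1 h2
    simpa using this
  have hdeg : ∀ j : Fin K × Fin L, (P j).natDegree < N + K := by
    intro j
    have h1 : (P j).natDegree ≤ (j.1 : ℕ) + N :=
      (natDegree_mul_le).trans (add_le_add (natDegree_X_pow_le _) (binPoly_natDegree _ _))
    have := j.1.2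
    omega
  have key := interp_det_le (F := ℚ_[2]) (ι := Fin K × Fin L) (N + K) (fun j n => (P j).coeff n)
    (fun i => (ζ i : ℚ_[2])) (fun j i => (δ j i : ℚ_[2])) 1 4
    (fun j => (N + K) * 4 ^ (j.1 : ℕ)) (by norm_num) (by norm_num)
    (fun i => by simpa using Padic.norm_int_le_one (p := 2) (ζ i : ℤ))
    (by
      intro j
      have : ∀ n ∈ range (N + K), ‖(P j).coeff n‖ * ((4 : ℝ) * 1) ^ n ≤ 4 ^ (j.1 : ℕ) := by
        intro n _
        simp only [P, coeff_X_pow_mul', mul_one]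
        split_ifs with h
        · have := binPoly_coeff_norm N (β j.2) (n - j.1)
          calc _ ≤ (1 / 4 : ℝ) ^ (n - j.1) * 4 ^ n := by gcongr
            _ = (1 / 4 : ℝ) ^ (n - j.1) * (4 ^ (n - j.1) * 4 ^ (j.1 : ℕ)) := by
              rw [← pow_add, Nat.sub_add_cancel h]
            _ = ((1 / 4) * 4) ^ (n - j.1) * 4 ^ (j.1 : ℕ) := by rw [mul_pow]; ring
            _ = _ := by norm_num
        · simp
      refine (Finset.sum_le_sum this).trans ?_
      simp)
    (by
      intro j i
      rw [hcard]
      have h1 : ‖(δ j i : ℚ_[2])‖ ≤ (2 : ℝ) ^ (-((2 * N : ℕ) : ℤ)) := by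
        have := (Padic.norm_int_le_pow_iff_dvd (p := 2) (δ j i) (2 * N)).mpr
          (by exact_mod_cast hδ j i)
        exact_mod_cast this
      have h4 : (4 : ℝ) ^ N = 2 ^ (2 * N) := by rw [pow_mul (2 : ℝ)]; norm_num
      have h5 : (1 : ℝ) ≤ 4 ^ (j.1 : ℕ) := one_le_pow₀ (by norm_num)
      have h6 : (1 : ℝ) ≤ N + K := by
        have := j.1.2
        have : 1 ≤ N + K := by omega
        exact_mod_cast this
      calc _ ≤ (2 : ℝ) ^ (-((2 * N : ℕ) : ℤ)) * 4 ^ N := by gcongr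
        _ = 1 := by rw [h4, zpow_neg, zpow_natCast]; exact inv_mul_cancel₀ (by positivity)
        _ ≤ _ := one_le_mul_of_one_le_of_one_le h6 h5)
  rw [hcard] at key
  have hdet : (Matrix.of fun j i : Fin K × Fin L => ∑ n ∈ range (N + K), (P j).coeff n * (ζ i : ℚ_[2]) ^ n +
      (δ j i : ℚ_[2])).det = (D : ℚ_[2]) := by
    have := congrArg (Int.castRingHom ℚ_[2]) hDdef
    rw [RingHom.map_det] at this
    rw [← eq_intCast (Int.castRingHom ℚ_[2]) D, this]
    congr 1
    ext j i
    simp only [Matrix.of_apply, RingHom.mapMatrix_apply, Matrix.map_apply, eq_intCast]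
    rw [← eval_eq_sum_range' (hdeg j)]
    simp only [P, eval_mul, eval_pow, eval_X, binPoly_eval, δ, ζ]
    push_cast
    ring
  rw [hdet] at key
  have h1 := one_le_abs_mul_norm D hD
  calc (4 : ℝ) ^ (N * (N - 1) / 2) ≤ (|(D : ℝ)| * ‖(D : ℚ_[2])‖) * 4 ^ (N * (N - 1) / 2) :=
        le_mul_of_one_le_left (by positivity) h1
    _ = |(D : ℝ)| * (‖(D : ℚ_[2])‖ * 4 ^ (N * (N - 1) / 2)) := by ring
    _ ≤ _ := by
      rw [hN] at key ⊢
      push_cast at key ⊢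
      gcongr

end ExpSum

/-! ### The archimedean interpolation determinant -/

namespace ExpSum
open Finset Filter Topology

lemma tendsto_exp_partial (t : ℝ) (k : ℕ) :
    Tendsto (fun T : ℕ => ∑ m ∈ range (T - k), t ^ m / m.factorial) atTop (𝓝 (Real.exp t)) := by
  have h : HasSum (fun m : ℕ => t ^ m / m.factorial) (Real.exp t) := by
    rw [Real.exp_eq_exp_ℝ]
    exact NormedSpace.expSeries_div_hasSum_exp t
  exact h.tendsto_sum_nat.comp (tendsto_sub_atTop_nat k)

lemma sum_shift (e : ℕ → ℝ) (k T : ℕ) :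
    ∑ n ∈ range T, (if k ≤ n then e n else 0) = ∑ m ∈ range (T - k), e (m + k) := by
  rw [← Finset.sum_filter]
  have : (range T).filter (fun n => k ≤ n) = Finset.Ico k T := by
    ext n; simp; omega
  rw [this, Finset.sum_Ico_eq_sum_range]
  apply Finset.sum_congr rfl
  intro m _; rw [add_comm]

/-- With `η = l₁ / y`, the entries of the determinant `D` are `ζ ^ k * exp (l * η * ζ)` up to the factors
`exp (l * s * τ)`, which are close to 1. The interpolation bound with `ρ = e` applies to `D`,
whereas `1 ≤ |D|`. -/
lemma real_core (p q : ℤ) (l₁ m₁ τ Q : ℝ) (x y R S K L : ℕ) (hp : (p : ℝ) = Real.exp l₁)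
    (hq : (q : ℝ) = Real.exp m₁) (hl : 0 < l₁) (hy : 0 < y) (hR : 0 < R) (hL : 0 < L)
    (hτ : y * m₁ - x * l₁ = y * τ)
    (hsmall : 8 * L * S * |τ| * Real.exp (K * L : ℕ) ≤ 1)
    (hQ : 2 * R * l₁ + 2 * S * m₁ ≤ 8 * Q)
    (r s : Fin K × Fin L → ℕ) (hr : ∀ i, r i ≤ 2 * R) (hs : ∀ i, s i ≤ 2 * S) (D : ℤ)
    (hDdef : D = (Matrix.of fun j i : Fin K × Fin L => (((r i * y + s i * x : ℕ) : ℤ)) ^ (j.1 : ℕ) *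
        (p ^ r i * q ^ s i) ^ (j.2 : ℕ)).det) (hD : D ≠ 0) :
    (Real.exp 1) ^ (K * L * (K * L - 1) / 2) ≤
      ((K * L).factorial * ∏ j : Fin K × Fin L,
        (2 * ((Real.exp 1 * (2 * R * y + 2 * S * x)) ^ (j.1 : ℕ) *
          Real.exp (j.2 * (Real.exp 1 * (8 * Q + 1)))))) := by
  have hcard : Fintype.card (Fin K × Fin L) = K * L := by simp
  set N := K * L with hN
  set E := Real.exp 1 with hE
  have hE1 : 1 ≤ E := Real.one_le_exp (by norm_num)
  have hy0 : (0 : ℝ) < y := by exact_mod_cast hy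
  have hy1 : (1 : ℝ) ≤ y := by exact_mod_cast hy
  have hR1 : (1 : ℝ) ≤ R := by exact_mod_cast hR
  have hL1 : (1 : ℝ) ≤ L := by exact_mod_cast hL
  set Zm : ℝ := 2 * R * y + 2 * S * x with hZm
  have hZm1 : 1 ≤ Zm := by
    have : (1 : ℝ) ≤ R * y := one_le_mul_of_one_le_of_one_le hR1 hy1
    have h2 : (0 : ℝ) ≤ S * x := by positivity
    rw [hZm]; nlinarith
  set η : ℝ := l₁ / y with hη
  have hη0 : 0 < η := by positivity
  have hexpN : 1 ≤ Real.exp (N : ℕ) := Real.one_le_exp (by positivity)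
  have hSτ : 2 * S * |τ| ≤ 1 := by
    have h0 : 0 ≤ S * |τ| := by positivity
    have h1 : (1 : ℝ) ≤ L * Real.exp (N : ℕ) := one_le_mul_of_one_le_of_one_le hL1 hexpN
    have h2 := mul_le_mul_of_nonneg_left h1 h0
    nlinarith
  have hηZ : η * Zm ≤ 8 * Q + 1 := by
    have h1 : η * Zm = 2 * R * l₁ + 2 * S * (m₁ - τ) := by
      have : m₁ - τ = x * l₁ / y := by field_simp; linarith
      rw [this, hη, hZm]; field_simp
    have h2 : -τ ≤ |τ| := neg_le_abs τ
    have h3 : (S : ℝ) * (-τ) ≤ S * |τ| := by gcongr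
    rw [h1]; nlinarith
  have hηZ0 : 0 ≤ η * Zm := by positivity
  let ζ : Fin K × Fin L → ℝ := fun i => ((r i * y + s i * x : ℕ) : ℝ)
  have hζ0 : ∀ i, 0 ≤ ζ i := fun i => by positivity
  have hζ : ∀ i, ζ i ≤ Zm := by
    intro i
    have h1 : (r i : ℝ) ≤ 2 * R := by exact_mod_cast hr i
    have h2 : (s i : ℝ) ≤ 2 * S := by exact_mod_cast hs i
    simp only [ζ, hZm]; push_cast
    gcongr
  let C : Fin K × Fin L → ℝ := fun j => (E * Zm) ^ (j.1 : ℕ) * Real.exp (j.2 * (E * (8 * Q + 1)))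
  have hC1 : ∀ j, 1 ≤ C j := by
    intro j
    apply one_le_mul_of_one_le_of_one_le
    · exact one_le_pow₀ (one_le_mul_of_one_le_of_one_le hE1 hZm1)
    · apply Real.one_le_exp
      have : 0 ≤ 8 * Q + 1 := hηZ0.trans hηZ
      positivity
  -- the part of the exponential series beyond the cut-off `T`
  let tail : ℕ → Fin K × Fin L → Fin K × Fin L → ℝ := fun T j i => ζ i ^ (j.1 : ℕ) *
    (Real.exp (j.2 * η * ζ i) - ∑ m ∈ range (T - j.1), (j.2 * η * ζ i) ^ m / m.factorial)
  obtain ⟨T, hT⟩ : ∃ T, ∀ j i, |tail T j i| * E ^ N ≤ 1 / 2 := by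
    have : ∀ j i, ∀ᶠ T in atTop, |tail T j i| * E ^ N ≤ 1 / 2 := by
      intro j i
      have h1 := tendsto_exp_partial (j.2 * η * ζ i) j.1
      have h2 : Tendsto (fun T => |tail T j i| * E ^ N) atTop (𝓝 (|ζ i ^ (j.1 : ℕ) *
          (Real.exp (j.2 * η * ζ i) - Real.exp (j.2 * η * ζ i))| * E ^ N)) :=
        (((tendsto_const_nhds.sub h1).const_mul _).abs).mul_const _
      rw [sub_self, mul_zero, abs_zero, zero_mul] at h2
      exact h2.eventually_le_const (by norm_num)
    have h := eventually_all.mpr (fun j => eventually_all.mpr (this j))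
    exact h.exists
  let δ : Fin K × Fin L → Fin K × Fin L → ℝ := fun j i =>
    ζ i ^ (j.1 : ℕ) * Real.exp (j.2 * η * ζ i) * (Real.exp (j.2 * s i * τ) - 1) + tail T j i
  let c : Fin K × Fin L → ℕ → ℝ := fun j n =>
    if (j.1 : ℕ) ≤ n then (j.2 * η) ^ (n - j.1) / (n - j.1 : ℕ).factorial else 0
  have hE_N : E ^ N = Real.exp (N : ℕ) := by rw [hE, ← Real.exp_nat_mul, mul_one]
  have key := interp_det_le (F := ℝ) (ι := Fin K × Fin L) T c ζ δ Zm E C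
    (by linarith) hE1 (fun i => by rw [Real.norm_of_nonneg (hζ0 i)]; exact hζ i)
    (by
      intro j
      have h1 : ∑ n ∈ range T, ‖c j n‖ * (E * Zm) ^ n = ∑ n ∈ range T,
          (if (j.1 : ℕ) ≤ n then (j.2 * η) ^ (n - j.1) / (n - j.1 : ℕ).factorial * (E * Zm) ^ n
            else 0) := by
        apply Finset.sum_congr rfl
        intro n _
        simp only [c]
        split_ifs with h
        · rw [Real.norm_of_nonneg (by positivity)]
        · simp
      rw [h1, sum_shift]
      have h2 : ∀ m : ℕ, ((j.2 : ℝ) * η) ^ (m + j.1 - j.1) / (m + j.1 - j.1 : ℕ).factorial *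
          (E * Zm) ^ (m + (j.1 : ℕ)) =
          (E * Zm) ^ (j.1 : ℕ) * ((j.2 * (E * (η * Zm))) ^ m / m.factorial) := by
        intro m
        rw [Nat.add_sub_cancel, pow_add, show (j.2 : ℝ) * (E * (η * Zm)) = j.2 * η * (E * Zm) by ring,
          mul_pow ((j.2 : ℝ) * η)]
        ring
      simp only [h2]
      rw [← Finset.mul_sum]
      simp only [C]
      gcongr
      refine (Real.sum_le_exp_of_nonneg (by positivity) _).trans ?_
      apply Real.exp_le_exp.mpr
      gcongr)
    (by
      intro j i
      rw [hcard]
      set t : ℝ := j.2 * s i * τ with ht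
      have hs' : (s i : ℝ) ≤ 2 * S := by exact_mod_cast hs i
      have hj : ((j.2 : ℕ) : ℝ) ≤ L := by exact_mod_cast j.2.2.le
      have ht1 : |t| ≤ L * (2 * S) * |τ| := by
        rw [ht, abs_mul, abs_of_nonneg (by positivity : (0 : ℝ) ≤ j.2 * s i)]
        gcongr
      have ht2 : |t| * E ^ N ≤ 1 / 4 := by
        rw [hE_N]
        calc _ ≤ L * (2 * S) * |τ| * Real.exp (N : ℕ) := by gcongr
          _ ≤ _ := by linarith
      have ht3 : |t| ≤ 1 := by
        have : |t| ≤ |t| * E ^ N := le_mul_of_one_le_right (abs_nonneg _) (one_le_pow₀ hE1)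
        linarith
      have ht4 := Real.abs_exp_sub_one_le ht3
      have hmain : |ζ i ^ (j.1 : ℕ) * Real.exp (j.2 * η * ζ i)| ≤ C j := by
        have := hζ0 i
        rw [abs_of_nonneg (by positivity)]
        simp only [C]
        have h8 : 0 ≤ 8 * Q + 1 := hηZ0.trans hηZ
        refine mul_le_mul ?_ (Real.exp_le_exp.mpr ?_) (by positivity) (by positivity)
        · gcongr
          calc ζ i ≤ Zm := hζ i
            _ ≤ E * Zm := le_mul_of_one_le_left (by linarith) hE1
        · calc (j.2 : ℝ) * η * ζ i = j.2 * (η * ζ i) := by ring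
            _ ≤ j.2 * (η * Zm) := by gcongr; exact hζ i
            _ ≤ j.2 * (8 * Q + 1) := by gcongr
            _ ≤ j.2 * (E * (8 * Q + 1)) := by gcongr; exact le_mul_of_one_le_left h8 hE1
      have hC1' := hC1 j
      calc ‖δ j i‖ * E ^ N ≤ (|ζ i ^ (j.1 : ℕ) * Real.exp (j.2 * η * ζ i)| * |Real.exp t - 1| +
            |tail T j i|) * E ^ N := by
            gcongr
            rw [← abs_mul]
            exact abs_add_le _ _
        _ ≤ (C j * (2 * |t|) + |tail T j i|) * E ^ N := by gcongr
        _ = C j * 2 * (|t| * E ^ N) + |tail T j i| * E ^ N := by ring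
        _ ≤ C j * 2 * (1 / 4) + 1 / 2 := by
            gcongr
            exact hT j i
        _ ≤ C j := by linarith)
  rw [hcard] at key
  have hdet : (Matrix.of fun j i : Fin K × Fin L => ∑ n ∈ range T, c j n * ζ i ^ n + δ j i).det =
      (D : ℝ) := by
    have := congrArg (Int.castRingHom ℝ) hDdef
    rw [RingHom.map_det] at this
    rw [← eq_intCast (Int.castRingHom ℝ) D, this]
    congr 1
    ext j i
    simp only [Matrix.of_apply, RingHom.mapMatrix_apply, Matrix.map_apply, eq_intCast]
    have h1 : ∑ n ∈ range T, c j n * ζ i ^ n = ζ i ^ (j.1 : ℕ) *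
        ∑ m ∈ range (T - j.1), (j.2 * η * ζ i) ^ m / m.factorial := by
      have : ∀ n, c j n * ζ i ^ n = (if (j.1 : ℕ) ≤ n then
          (j.2 * η) ^ (n - j.1) / (n - j.1 : ℕ).factorial * ζ i ^ n else 0) := by
        intro n; simp only [c]; split_ifs <;> simp
      simp only [this]
      rw [sum_shift, Finset.mul_sum]
      apply Finset.sum_congr rfl
      intro m _
      rw [Nat.add_sub_cancel, pow_add, mul_pow ((j.2 : ℝ) * η)]
      ring
    rw [h1]
    simp only [δ, tail]
    have h2 : (((p ^ r i * q ^ s i) ^ (j.2 : ℕ) : ℤ) : ℝ) =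
        Real.exp (j.2 * η * ζ i) * Real.exp (j.2 * s i * τ) := by
      push_cast
      rw [hp, hq, ← Real.exp_nat_mul, ← Real.exp_nat_mul, ← Real.exp_add, ← Real.exp_nat_mul,
        ← Real.exp_add]
      congr 1
      have h3 : m₁ = x * η + τ := by rw [hη]; field_simp; linarith
      have h4 : l₁ = y * η := by rw [hη]; field_simp
      rw [h3, h4]
      simp only [ζ]
      push_cast
      ring
    rw [Int.cast_mul, h2]
    simp only [ζ]
    push_cast
    ring
  rw [hdet] at key
  have h1 : (1 : ℝ) ≤ ‖(D : ℝ)‖ := by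
    rw [Real.norm_eq_abs]
    exact_mod_cast Int.one_le_abs hD
  calc E ^ (N * (N - 1) / 2) ≤ ‖(D : ℝ)‖ * E ^ (N * (N - 1) / 2) :=
        le_mul_of_one_le_left (by positivity) h1
    _ ≤ _ := key

end ExpSum

/-! ### Logarithmic form of the determinant inequalities -/

namespace ExpSum
open Finset

lemma log_prod_le (K L : ℕ) (c₀ u v : ℝ) (hc : 0 < c₀) (hu : 1 ≤ u) (hv : 0 ≤ v) :
    Real.log (∏ j : Fin K × Fin L, (c₀ * (u ^ (j.1 : ℕ) * Real.exp (j.2 * v)))) ≤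
      (K * L : ℕ) * (Real.log c₀ + K / 2 * Real.log u + L / 2 * v) := by
  have hu0 : 0 < u := by linarith
  have hlu : 0 ≤ Real.log u := Real.log_nonneg hu
  have gauss : ∀ n : ℕ, ∑ i : Fin n, ((i : ℕ) : ℝ) ≤ n * (n / 2) := by
    intro n
    rw [Fin.sum_univ_eq_sum_range (fun i => (i : ℝ))]
    have h := Finset.sum_range_id_mul_two n
    have h' : (∑ i ∈ range n, (i : ℝ)) * 2 = n * ((n - 1 : ℕ) : ℝ) := by
      rw [← Nat.cast_mul, ← h]; push_cast; rfl
    have h2 : ((n - 1 : ℕ) : ℝ) ≤ n := by exact_mod_cast Nat.sub_le n 1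
    nlinarith [mul_le_mul_of_nonneg_left h2 (Nat.cast_nonneg (α := ℝ) n)]
  rw [Real.log_prod (fun j _ => by positivity)]
  have h1 : ∀ j : Fin K × Fin L, Real.log (c₀ * (u ^ (j.1 : ℕ) * Real.exp (j.2 * v))) =
      Real.log c₀ + ((j.1 : ℕ) : ℝ) * Real.log u + ((j.2 : ℕ) : ℝ) * v := by
    intro j
    rw [Real.log_mul hc.ne' (by positivity), Real.log_mul (by positivity) (Real.exp_pos _).ne',
      Real.log_pow, Real.log_exp]
    ring
  simp only [h1]
  rw [Finset.sum_add_distrib, Finset.sum_add_distrib, ← Finset.sum_mul, ← Finset.sum_mul,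
    Fintype.sum_prod_type, Fintype.sum_prod_type, Fintype.sum_prod_type]
  simp only [Finset.sum_const, Finset.card_univ, Fintype.card_fin, nsmul_eq_mul]
  rw [← Finset.mul_sum]
  have hK := gauss K
  have hL := gauss L
  have e1 : (L * ∑ i : Fin K, ((i : ℕ) : ℝ)) * Real.log u ≤ (L * (K * (K / 2))) * Real.log u := by
    gcongr
  have e2 : (K * ∑ i : Fin L, ((i : ℕ) : ℝ)) * v ≤ (K * (L * (L / 2))) * v := by gcongr
  push_cast
  linarith

lemma log_factorial_le (N : ℕ) : Real.log N.factorial ≤ N * Real.log N := by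
  rw [← Real.log_pow]
  apply Real.log_le_log (by positivity)
  exact_mod_cast Nat.factorial_le_pow N

lemma cast_tri (N : ℕ) : ((N * (N - 1) / 2 : ℕ) : ℝ) = N * ((N - 1) / 2) := by
  rw [← Nat.choose_two_right, Nat.cast_choose_two]; ring

/-- The trivial archimedean bound for the determinant. -/
lemma det_size (A B : ℤ) (a₁ b₁ Q : ℝ) (x y R S K L : ℕ) (hA : (A : ℝ) = Real.exp a₁)
    (hB : (B : ℝ) = Real.exp b₁) (ha : 0 ≤ a₁) (hb : 0 ≤ b₁)
    (hQ : 2 * R * a₁ + 2 * S * b₁ ≤ 8 * Q)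
    (r s : Fin K × Fin L → ℕ) (hr : ∀ i, r i ≤ 2 * R) (hs : ∀ i, s i ≤ 2 * S) (D : ℤ)
    (hDdef : D = (Matrix.of fun j i : Fin K × Fin L => (((r i * y + s i * x : ℕ) : ℤ)) ^ (j.1 : ℕ) *
        (A ^ r i * B ^ s i) ^ (j.2 : ℕ)).det) :
    |(D : ℝ)| ≤ (K * L).factorial * ∏ j : Fin K × Fin L,
      ((2 * R * y + 2 * S * x : ℝ) ^ (j.1 : ℕ) * Real.exp (j.2 * (8 * Q))) := by
  have hdet : ((Matrix.of fun j i : Fin K × Fin L => (((r i * y + s i * x : ℕ) : ℤ)) ^ (j.1 : ℕ) *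
        (A ^ r i * B ^ s i) ^ (j.2 : ℕ)).map (Int.castRingHom ℝ)).det = (D : ℝ) := by
    have := congrArg (Int.castRingHom ℝ) hDdef
    rw [RingHom.map_det] at this
    rw [← eq_intCast (Int.castRingHom ℝ) D, this]
    rfl
  rw [← hdet, ← Real.norm_eq_abs]
  have hcard : Fintype.card (Fin K × Fin L) = K * L := by simp
  rw [← hcard]
  apply norm_det_le
  intro j i
  simp only [Matrix.map_apply, Matrix.of_apply, eq_intCast]
  have h1 : (r i : ℝ) ≤ 2 * R := by exact_mod_cast hr i
  have h2 : (s i : ℝ) ≤ 2 * S := by exact_mod_cast hs i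
  push_cast
  rw [hA, hB, ← Real.exp_nat_mul, ← Real.exp_nat_mul, ← Real.exp_add, ← Real.exp_nat_mul]
  rw [Real.norm_of_nonneg (by positivity)]
  have h3 : r i * a₁ + s i * b₁ ≤ 8 * Q := by
    have := mul_le_mul_of_nonneg_right h1 ha
    have := mul_le_mul_of_nonneg_right h2 hb
    linarith
  gcongr

/-- If `2 ^ Z` divides `A ^ x - B ^ y` and `Z ≥ 2 * K * L`, then the parameters satisfy the inequality
obtained by comparing `two_adic_core` with `det_size`, after taking logarithms and dividing by
`K * L`. -/
lemma two_adic_ineq (A B : ℕ) (a₁ b₁ Q : ℝ) (x y Z R S K L : ℕ) (hA2 : 2 ≤ A) (hB2 : 2 ≤ B)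
    (hA : (8 : ℤ) ∣ (A : ℤ) - 1)
    (hB : (8 : ℤ) ∣ (B : ℤ) - 1) (hAB : Nat.Coprime A B) (hAe : (A : ℝ) = Real.exp a₁)
    (hBe : (B : ℝ) = Real.exp b₁) (hx : 0 < x) (hy : 0 < y) (hxy : Nat.Coprime x y)
    (hK : 0 < K) (hL : 0 < L) (hZ : 2 * (K * L) ≤ Z) (hdvd : (2 : ℤ) ^ Z ∣ (A : ℤ) ^ x - (B : ℤ) ^ y)
    (hRS : K * L ≤ R * S) (hns : R ≤ x ∨ S ≤ y) (hQ : 2 * R * a₁ + 2 * S * b₁ ≤ 8 * Q) :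
    ((K * L : ℕ) - 1 : ℝ) / 2 * Real.log 4 ≤ 2 * Real.log (K * L : ℕ) +
      Real.log (2 * ((K * L : ℕ) + K)) + K / 2 * (Real.log 4 + Real.log (2 * R * y + 2 * S * x)) +
      L / 2 * (8 * Q) := by
  obtain ⟨r, s, hr, hs, hD⟩ := exists_det_ne_zero A B x y K L R S hA2 hB2 hAB hx hy hxy hK hL hRS hns
  have ha : 0 ≤ a₁ := by
    rw [← Real.one_le_exp_iff, ← hAe]; exact_mod_cast (by omega : 1 ≤ A)
  have hb : 0 ≤ b₁ := by
    rw [← Real.one_le_exp_iff, ← hBe]; exact_mod_cast (by omega : 1 ≤ B)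
  have hNpos : 0 < K * L := Nat.mul_pos hK hL
  have hRSpos : 0 < R * S := lt_of_lt_of_le hNpos hRS
  have hRpos : 0 < R := Nat.pos_of_mul_pos_right hRSpos
  have hcore : (4 : ℝ) ^ (K * L * (K * L - 1) / 2) ≤
      |(((Matrix.of fun j i : Fin K × Fin L => (((r i * y + s i * x : ℕ) : ℤ)) ^ (j.1 : ℕ) *
        ((A : ℤ) ^ r i * (B : ℤ) ^ s i) ^ (j.2 : ℕ)).det : ℤ) : ℝ)| *
      ((K * L).factorial * ∏ j : Fin K × Fin L, (2 * ((K * L + K) * 4 ^ (j.1 : ℕ)))) := by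
    rcases Nat.even_or_odd y with he | ho
    · have hxo : Odd x := by
        rcases Nat.even_or_odd x with h | h
        · exact absurd (hxy ▸ Nat.dvd_gcd h.two_dvd he.two_dvd) (by norm_num)
        · exact h
      refine two_adic_core B A y x Z K L hB hA hxo hZ (by rw [← neg_sub]; exact hdvd.neg_right)
        s r _ ?_ hD
      congr 1
      ext j i
      simp only [Matrix.of_apply]
      rw [mul_comm ((A : ℤ) ^ r i), add_comm (r i * y)]
    · exact two_adic_core A B x y Z K L hA hB ho hZ hdvd r s _ rfl hD
  set D := (Matrix.of fun j i : Fin K × Fin L => (((r i * y + s i * x : ℕ) : ℤ)) ^ (j.1 : ℕ) *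
        ((A : ℤ) ^ r i * (B : ℤ) ^ s i) ^ (j.2 : ℕ)).det with hDdef
  have hsize := det_size A B a₁ b₁ Q x y R S K L (by exact_mod_cast hAe) (by exact_mod_cast hBe)
    ha hb hQ r s hr hs D hDdef
  set N := K * L with hN
  have hN0 : (0 : ℝ) < N := by exact_mod_cast hNpos
  have hQ0 : 0 ≤ 8 * Q := le_trans (by positivity) hQ
  have hZm1 : (1 : ℝ) ≤ 2 * R * y + 2 * S * x := by
    have h1 : 1 ≤ R * y := Nat.mul_pos hRpos hy
    have : 1 ≤ 2 * R * y + 2 * S * x := by nlinarith [Nat.zero_le (2 * S * x)]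
    exact_mod_cast this
  have hK1 : (0 : ℝ) < K := by exact_mod_cast hK
  have l1 := log_prod_le K L 1 (2 * R * y + 2 * S * x) (8 * Q) one_pos hZm1 hQ0
  have l2 := log_prod_le K L (2 * (N + K)) 4 0 (by positivity) (by norm_num) le_rfl
  simp only [one_mul] at l1
  simp only [mul_zero, Real.exp_zero, mul_one, Real.log_one, zero_add, add_zero] at l1 l2
  have hP1 : 0 < ∏ j : Fin K × Fin L,
      ((2 * R * y + 2 * S * x : ℝ) ^ (j.1 : ℕ) * Real.exp (j.2 * (8 * Q))) :=
    Finset.prod_pos fun j _ => by positivity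
  have hP2 : 0 < ∏ j : Fin K × Fin L, (2 * ((N : ℝ) + K) * 4 ^ (j.1 : ℕ)) :=
    Finset.prod_pos fun j _ => by positivity
  have hfac : (0 : ℝ) < N.factorial := by positivity
  have htot : (4 : ℝ) ^ (N * (N - 1) / 2) ≤ (N.factorial * ∏ j : Fin K × Fin L,
      ((2 * R * y + 2 * S * x : ℝ) ^ (j.1 : ℕ) * Real.exp (j.2 * (8 * Q)))) *
      (N.factorial * ∏ j : Fin K × Fin L, (2 * ((N : ℝ) + K) * 4 ^ (j.1 : ℕ))) := by
    refine hcore.trans (mul_le_mul hsize (le_of_eq ?_) ?_ (by positivity))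
    · congr 1
      push_cast
      apply Finset.prod_congr rfl
      intro j _
      ring
    · positivity
  have hlog := Real.log_le_log (by positivity) htot
  rw [Real.log_mul (by positivity) (by positivity), Real.log_mul hfac.ne' hP1.ne',
    Real.log_mul hfac.ne' hP2.ne', Real.log_pow, cast_tri N] at hlog
  have l3 := log_factorial_le N
  have : (N : ℝ) * (((N : ℝ) - 1) / 2 * Real.log 4) ≤ N * (2 * Real.log N +
      Real.log (2 * (N + K)) + K / 2 * (Real.log 4 + Real.log (2 * R * y + 2 * S * x)) +
      L / 2 * (8 * Q)) := by linarith
  exact le_of_mul_le_mul_left this hN0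

/-- The archimedean analogue of `two_adic_ineq`, for `A ^ x` and `B ^ y` very close to each other:
logarithm of the inequality of `real_core`, divided by `K * L`. -/
lemma real_ineq (A B : ℕ) (a₁ b₁ τ Q : ℝ) (x y R S K L : ℕ) (hA2 : 2 ≤ A) (hB2 : 2 ≤ B)
    (hAB : Nat.Coprime A B) (hAe : (A : ℝ) = Real.exp a₁)
    (hBe : (B : ℝ) = Real.exp b₁) (hx : 0 < x) (hy : 0 < y) (hxy : Nat.Coprime x y)
    (hK : 0 < K) (hL : 0 < L)
    (hτ : y * b₁ - x * a₁ = y * τ)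
    (hsmall : 8 * L * S * |τ| * Real.exp (K * L : ℕ) ≤ 1)
    (hRS : K * L ≤ R * S) (hns : R ≤ x ∨ S ≤ y) (hQ : 2 * R * a₁ + 2 * S * b₁ ≤ 8 * Q) :
    ((K * L : ℕ) - 1 : ℝ) / 2 ≤ Real.log (K * L : ℕ) +
      Real.log 2 + K / 2 * (1 + Real.log (2 * R * y + 2 * S * x)) +
      L / 2 * (Real.exp 1 * (8 * Q + 1)) := by
  obtain ⟨r, s, hr, hs, hD⟩ := exists_det_ne_zero A B x y K L R S hA2 hB2 hAB hx hy hxy hK hL hRS hns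
  have ha : 0 < a₁ := by
    rw [← Real.one_lt_exp_iff, ← hAe]; exact_mod_cast (by omega : 1 < A)
  have hb : 0 < b₁ := by
    rw [← Real.one_lt_exp_iff, ← hBe]; exact_mod_cast (by omega : 1 < B)
  have hNpos : 0 < K * L := Nat.mul_pos hK hL
  have hRSpos : 0 < R * S := lt_of_lt_of_le hNpos hRS
  have hRpos : 0 < R := Nat.pos_of_mul_pos_right hRSpos
  have hcore := real_core A B a₁ b₁ τ Q x y R S K L (by exact_mod_cast hAe) (by exact_mod_cast hBe)
    ha hy hRpos hL hτ hsmall hQ r s hr hs _ rfl hD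
  set N := K * L with hN
  have hN0 : (0 : ℝ) < N := by exact_mod_cast hNpos
  have hQ0 : 0 ≤ 8 * Q := le_trans (by positivity) hQ
  have hE : 1 ≤ Real.exp 1 := Real.one_le_exp (by norm_num)
  have hZm1 : (1 : ℝ) ≤ 2 * R * y + 2 * S * x := by
    have h1 : 1 ≤ R * y := Nat.mul_pos hRpos hy
    have : 1 ≤ 2 * R * y + 2 * S * x := by nlinarith [Nat.zero_le (2 * S * x)]
    exact_mod_cast this
  have l1 := log_prod_le K L 2 (Real.exp 1 * (2 * R * y + 2 * S * x)) (Real.exp 1 * (8 * Q + 1))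
    two_pos (one_le_mul_of_one_le_of_one_le hE hZm1) (by positivity)
  have hP1 : 0 < ∏ j : Fin K × Fin L, (2 * ((Real.exp 1 * (2 * R * y + 2 * S * x)) ^ (j.1 : ℕ) *
          Real.exp (j.2 * (Real.exp 1 * (8 * Q + 1))))) :=
    Finset.prod_pos fun j _ => by positivity
  have hfac : (0 : ℝ) < N.factorial := by positivity
  have hlog := Real.log_le_log (by positivity) hcore
  rw [Real.log_mul hfac.ne' hP1.ne', Real.log_pow, cast_tri N, Real.log_exp, mul_one] at hlog
  rw [Real.log_mul (Real.exp_pos 1).ne' (by positivity), Real.log_exp] at l1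
  have l3 := log_factorial_le N
  have : (N : ℝ) * (((N : ℝ) - 1) / 2) ≤ N * (Real.log N +
      Real.log 2 + K / 2 * (1 + Real.log (2 * R * y + 2 * S * x)) +
      L / 2 * (Real.exp 1 * (8 * Q + 1))) := by linarith
  exact le_of_mul_le_mul_left this hN0

end ExpSum

/-! ### Lower bounds for linear forms in two logarithms -/

namespace ExpSum
open Finset

/-- Choice of the box of points `R × S`, with `R = ⌈Q / a₁⌉` and `S = ⌈Q / b₁⌉`. If neither `R ≤ x` nor
`S ≤ y`, then the powers `A ^ x`, `B ^ y` themselves are at most `exp Q`. -/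
lemma box (a₁ b₁ Q : ℝ) (K L x y : ℕ) (ha : 0 < a₁) (hb : 0 < b₁) (haQ : a₁ ≤ Q) (hbQ : b₁ ≤ Q)
    (hKL : K * L * (a₁ * b₁) ≤ Q ^ 2) :
    ∃ R S : ℕ, K * L ≤ R * S ∧ 2 * R * a₁ + 2 * S * b₁ ≤ 8 * Q ∧
      (¬ (R ≤ x ∨ S ≤ y) → x * a₁ ≤ Q ∧ y * b₁ ≤ Q) ∧
      (2 * R * y + 2 * S * x : ℝ) ≤ 4 * Q * (x * a₁ + y * b₁) / (a₁ * b₁) ∧ S * b₁ ≤ 2 * Q := by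
  have hQ : 0 < Q := lt_of_lt_of_le ha haQ
  have hRub : (⌈Q / a₁⌉₊ : ℝ) * a₁ ≤ 2 * Q := by
    have h := (Nat.ceil_lt_add_one (div_pos hQ ha).le).le
    calc (⌈Q / a₁⌉₊ : ℝ) * a₁ ≤ (Q / a₁ + 1) * a₁ := by gcongr
      _ = Q + a₁ := by field_simp
      _ ≤ _ := by linarith
  have hSub : (⌈Q / b₁⌉₊ : ℝ) * b₁ ≤ 2 * Q := by
    have h := (Nat.ceil_lt_add_one (div_pos hQ hb).le).le
    calc (⌈Q / b₁⌉₊ : ℝ) * b₁ ≤ (Q / b₁ + 1) * b₁ := by gcongr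
      _ = Q + b₁ := by field_simp
      _ ≤ _ := by linarith
  have hRlb : Q / a₁ ≤ ⌈Q / a₁⌉₊ := Nat.le_ceil _
  have hSlb : Q / b₁ ≤ ⌈Q / b₁⌉₊ := Nat.le_ceil _
  refine ⟨⌈Q / a₁⌉₊, ⌈Q / b₁⌉₊, ?_, by linarith, ?_, ?_, hSub⟩
  · have : ((K * L : ℕ) : ℝ) ≤ (⌈Q / a₁⌉₊ * ⌈Q / b₁⌉₊ : ℕ) := by
      push_cast
      calc (K * L : ℝ) ≤ Q / a₁ * (Q / b₁) := by
            rw [div_mul_div_comm, le_div_iff₀ (by positivity)]; linarith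
        _ ≤ _ := by gcongr
    exact_mod_cast this
  · intro h
    push Not at h
    have h1 := Nat.lt_ceil.mp h.1
    have h2 := Nat.lt_ceil.mp h.2
    rw [lt_div_iff₀ ha] at h1
    rw [lt_div_iff₀ hb] at h2
    exact ⟨h1.le, h2.le⟩
  · rw [le_div_iff₀ (by positivity)]
    have e1 : (⌈Q / a₁⌉₊ * a₁) * (y * b₁) ≤ 2 * Q * (y * b₁) := by gcongr
    have e2 : (⌈Q / b₁⌉₊ * b₁) * (x * a₁) ≤ 2 * Q * (x * a₁) := by gcongr
    nlinarith

lemma log_le_small {t : ℝ} (ht : 0 < t) : Real.log t ≤ t / 100 + 4 := by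
  have h1 : Real.log t = Real.log (t / 100) + Real.log 100 := by
    rw [← Real.log_mul (by positivity) (by norm_num)]; congr 1; ring
  have h2 := Real.log_le_sub_one_of_pos (by positivity : 0 < t / 100)
  have h3 : Real.log 100 ≤ 5 := by
    have : Real.log 100 ≤ Real.log (2 ^ 7) := Real.log_le_log (by norm_num) (by norm_num)
    rw [Real.log_pow] at this
    have := Real.log_two_lt_d9
    push_cast at *; linarith
  linarith

lemma log_four : Real.log 4 = 2 * Real.log 2 := by
  rw [show (4 : ℝ) = 2 ^ 2 by norm_num, Real.log_pow]; push_cast; ring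

/-- The 2-adic valuation of `A ^ x - B ^ y` is less than `2 * K * L`. If the box of `box` with
`Q = K / 30` satisfies `R ≤ x ∨ S ≤ y`, a larger valuation contradicts `two_adic_ineq`; otherwise
the valuation is bounded trivially by the size of the number. -/
lemma two_adic_bound (A B : ℕ) (H : ℝ) (x y Z K L : ℕ) (hA2 : 2 ≤ A) (hB2 : 2 ≤ B)
    (hA : (8 : ℤ) ∣ (A : ℤ) - 1)
    (hB : (8 : ℤ) ∣ (B : ℤ) - 1) (hAB : Nat.Coprime A B)
    (ha : 2 ≤ Real.log A) (hb : 2 ≤ Real.log B)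
    (hx : 0 < x) (hy : 0 < y) (hxy : Nat.Coprime x y)
    (hL : 100 ≤ L) (hK : 900 * L * (Real.log A * Real.log B) ≤ K)
    (hdvd : (2 : ℤ) ^ Z ∣ (A : ℤ) ^ x - (B : ℤ) ^ y)
    (hxH : x * Real.log A ≤ 2 * H) (hyH : y * Real.log B ≤ 2 * H)
    (hW : Real.log (K * H) + 1.4 ≤ 0.4 * L) : Z < 2 * (K * L) := by
  by_contra hZ
  push Not at hZ
  set a₁ := Real.log A with ha₁
  set b₁ := Real.log B with hb₁
  have hA0 : (0 : ℝ) < A := by exact_mod_cast (by omega : 0 < A)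
  have hB0 : (0 : ℝ) < B := by exact_mod_cast (by omega : 0 < B)
  have hAe : (A : ℝ) = Real.exp a₁ := (Real.exp_log hA0).symm
  have hBe : (B : ℝ) = Real.exp b₁ := (Real.exp_log hB0).symm
  have hL' : (100 : ℝ) ≤ L := by exact_mod_cast hL
  have hab4 : 4 ≤ a₁ * b₁ := by nlinarith
  have hab1 : 2 * a₁ ≤ a₁ * b₁ := by nlinarith
  have hab2 : 2 * b₁ ≤ a₁ * b₁ := by nlinarith
  have hK4 : 900 * 100 * (a₁ * b₁) ≤ K := le_trans (by gcongr) hK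
  have hKbig : (360000 : ℝ) ≤ K := by nlinarith
  have hKpos : 0 < K := by
    have : (0 : ℝ) < K := by linarith
    exact_mod_cast this
  set Q : ℝ := K / 30 with hQ
  have hQ2 : K * L * (a₁ * b₁) ≤ Q ^ 2 := by
    rw [hQ]
    have := mul_le_mul_of_nonneg_left hK (by positivity : (0 : ℝ) ≤ K / 900)
    nlinarith
  obtain ⟨R, S, hRS, hQ8, hsm, hZm, _⟩ := box a₁ b₁ Q K L x y (by linarith) (by linarith)
    (by rw [hQ]; linarith) (by rw [hQ]; linarith) hQ2
  have hlog2 : 0.69 < Real.log 2 := by have := Real.log_two_gt_d9; linarith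
  have hlog2' : Real.log 2 < 0.7 := by have := Real.log_two_lt_d9; linarith
  have hNK : (100 : ℝ) * K ≤ (K * L : ℕ) := by push_cast; nlinarith
  by_cases hns : R ≤ x ∨ S ≤ y
  · have hineq := two_adic_ineq A B a₁ b₁ Q x y Z R S K L hA2 hB2 hA hB hAB hAe hBe hx hy hxy hKpos
      (by omega) hZ hdvd hRS hns hQ8
    have hRSpos : 0 < R * S := lt_of_lt_of_le (Nat.mul_pos hKpos (by omega)) hRS
    have hRpos : 0 < R := Nat.pos_of_mul_pos_right hRSpos
    have hZpos : (0 : ℝ) < 2 * R * y + 2 * S * x := by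
      have : (0 : ℝ) < R := by exact_mod_cast hRpos
      have : (0 : ℝ) < y := by exact_mod_cast hy
      positivity
    have hH : 0 ≤ H := by
      have : (0 : ℝ) ≤ x * a₁ := by positivity
      linarith
    have hZle : (2 * R * y + 2 * S * x : ℝ) ≤ K * H := by
      refine hZm.trans ?_
      rw [div_le_iff₀ (by positivity), hQ]
      have h1 : (K : ℝ) * (x * a₁ + y * b₁) ≤ K * (4 * H) := by gcongr; linarith
      have h2 : (K : ℝ) * H * 4 ≤ K * H * (a₁ * b₁) := by gcongr
      have h3 : (0 : ℝ) ≤ K * H := by positivity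
      linarith
    have hlz := Real.log_le_log hZpos hZle
    set N := K * L with hN
    have hN1 : (36000000 : ℝ) ≤ N := by linarith
    have hlN := log_le_small (by linarith : (0 : ℝ) < N)
    have h2N : Real.log (2 * (N + K)) ≤ Real.log N + 1.4 := by
      have : Real.log (2 * (N + K)) ≤ Real.log (4 * N) :=
        Real.log_le_log (by positivity) (by linarith)
      rw [Real.log_mul (x := 4) (by norm_num) (by positivity), log_four] at this
      linarith
    have h3 : (K : ℝ) / 2 * (Real.log 4 + Real.log (2 * R * y + 2 * S * x)) ≤ 0.2 * N := by
      have : Real.log 4 + Real.log (2 * R * y + 2 * S * x) ≤ 0.4 * L := by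
        rw [log_four]; linarith
      calc _ ≤ (K : ℝ) / 2 * (0.4 * L) := by gcongr
        _ = _ := by rw [hN]; push_cast; ring
    have h4 : (L : ℝ) / 2 * (8 * Q) = 4 / 30 * N := by rw [hQ, hN]; push_cast; ring
    have h5 : ((N : ℝ) - 1) / 2 * Real.log 4 ≥ (N - 1) * 0.69 := by
      rw [log_four]
      have : ((N : ℝ) - 1) * 0.69 ≤ (N - 1) * Real.log 2 := by gcongr; linarith
      linarith
    linarith
  · obtain ⟨hxQ, hyQ⟩ := hsm hns
    have hne : (A : ℤ) ^ x - (B : ℤ) ^ y ≠ 0 := by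
      intro h0
      have h1 : A ^ x = B ^ y := by
        have : (A : ℤ) ^ x = (B : ℤ) ^ y := by linarith
        exact_mod_cast this
      have h2 : Nat.Coprime (A ^ x) (B ^ y) := Nat.Coprime.pow x y hAB
      rw [h1, Nat.coprime_self] at h2
      have := Nat.one_lt_pow hy.ne' (by omega : 1 < B)
      omega
    have hle : (2 : ℤ) ^ Z ≤ |(A : ℤ) ^ x - (B : ℤ) ^ y| :=
      Int.le_of_dvd (abs_pos.mpr hne) ((dvd_abs _ _).mpr hdvd)
    have hle' : (2 : ℝ) ^ Z ≤ |(A : ℝ) ^ x - (B : ℝ) ^ y| := by exact_mod_cast hle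
    have hAx : (A : ℝ) ^ x ≤ Real.exp Q := by
      rw [hAe, ← Real.exp_nat_mul]; exact Real.exp_le_exp.mpr hxQ
    have hBy : (B : ℝ) ^ y ≤ Real.exp Q := by
      rw [hBe, ← Real.exp_nat_mul]; exact Real.exp_le_exp.mpr hyQ
    have habs : |(A : ℝ) ^ x - (B : ℝ) ^ y| ≤ Real.exp Q := by
      rw [abs_le]
      have : 0 ≤ (A : ℝ) ^ x := by positivity
      have : 0 ≤ (B : ℝ) ^ y := by positivity
      constructor <;> linarith
    have hl := Real.log_le_log (by positivity) (hle'.trans habs)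
    rw [Real.log_pow, Real.log_exp] at hl
    have hZ' : (2 : ℝ) * (K * L : ℕ) ≤ Z := by exact_mod_cast hZ
    have : (Z : ℝ) * 0.69 ≤ Z * Real.log 2 := by gcongr
    rw [hQ] at hl
    linarith

lemma small_aux (L S τ H N : ℝ) (h0 : 0 ≤ 8 * L * S) (hτ : |τ| ≤ 2 * Real.exp (-(H / 2)))
    (h1 : 16 * L * S ≤ Real.exp N) (hN : 4 * N ≤ H) : 8 * L * S * |τ| * Real.exp N ≤ 1 := by
  have e1 := mul_le_mul_of_nonneg_left hτ h0
  have e2 := mul_le_mul_of_nonneg_right h1 (Real.exp_pos (-(H / 2))).le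
  have e3 : 8 * L * S * |τ| ≤ Real.exp N * Real.exp (-(H / 2)) := by linarith
  have e4 := mul_le_mul_of_nonneg_right e3 (Real.exp_pos N).le
  rw [← Real.exp_add, ← Real.exp_add] at e4
  refine e4.trans (Real.exp_le_one_iff.mpr (by linarith))

set_option maxHeartbeats 1000000 in
/-- If `x * log A - y * log B` is positive but at most `2 * exp (-H / 2)`, then `H ≤ 4 * K * L`. As in
`two_adic_bound`, this follows from `real_ineq` with `Q = K / 60` unless `A ^ x` and `B ^ y` are
small, in which case their difference would be less than 1. -/
lemma real_bound (A B : ℕ) (H : ℝ) (x y K L : ℕ) (hA2 : 2 ≤ A) (hB2 : 2 ≤ B)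
    (hAB : Nat.Coprime A B)
    (ha : 1 ≤ Real.log A) (hb : 1 ≤ Real.log B)
    (hx : 0 < x) (hy : 0 < y) (hxy : Nat.Coprime x y)
    (hL : 100 ≤ L) (hK : 3600 * L * (Real.log A * Real.log B) ≤ K)
    (hpos : 0 < x * Real.log A - y * Real.log B)
    (hsmall : x * Real.log A - y * Real.log B ≤ 2 * Real.exp (-(H / 2)))
    (hxH : x * Real.log A ≤ H)
    (hW : Real.log (K * H) + 1.4 ≤ 0.4 * L) : H ≤ 4 * (K * L) := by
  by_contra hH4
  push Not at hH4
  set a₁ := Real.log A with ha₁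
  set b₁ := Real.log B with hb₁
  have hA0 : (0 : ℝ) < A := by exact_mod_cast (by omega : 0 < A)
  have hB0 : (0 : ℝ) < B := by exact_mod_cast (by omega : 0 < B)
  have hAe : (A : ℝ) = Real.exp a₁ := (Real.exp_log hA0).symm
  have hBe : (B : ℝ) = Real.exp b₁ := (Real.exp_log hB0).symm
  have hL' : (100 : ℝ) ≤ L := by exact_mod_cast hL
  have hab4 : 1 ≤ a₁ * b₁ := by nlinarith
  have hab1 : a₁ ≤ a₁ * b₁ := by nlinarith
  have hab2 : b₁ ≤ a₁ * b₁ := by nlinarith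
  have hK4 : 3600 * 100 * (a₁ * b₁) ≤ K := le_trans (by gcongr) hK
  have hKL' : 3600 * (L : ℝ) ≤ K := le_trans (by nlinarith) hK
  have hKbig : (360000 : ℝ) ≤ K := by nlinarith
  have hKpos : 0 < K := by
    have : (0 : ℝ) < K := by linarith
    exact_mod_cast this
  set Q : ℝ := K / 60 with hQ
  have hQ2 : K * L * (a₁ * b₁) ≤ Q ^ 2 := by
    rw [hQ]
    have := mul_le_mul_of_nonneg_left hK (by positivity : (0 : ℝ) ≤ K / 3600)
    nlinarith
  obtain ⟨R, S, hRS, hQ8, hsm, hZm, hSb⟩ := box a₁ b₁ Q K L x y (by linarith) (by linarith)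
    (by rw [hQ]; linarith) (by rw [hQ]; linarith) hQ2
  have hlog2 : 0.69 < Real.log 2 := by have := Real.log_two_gt_d9; linarith
  have hlog2' : Real.log 2 < 0.7 := by have := Real.log_two_lt_d9; linarith
  have hNK : (100 : ℝ) * K ≤ (K * L : ℕ) := by push_cast; nlinarith
  have hHN : 4 * ((K * L : ℕ) : ℝ) < H := by push_cast; exact hH4
  have hH : 0 ≤ H := by
    have : (0 : ℝ) ≤ x * a₁ := by positivity
    linarith
  by_cases hns : R ≤ x ∨ S ≤ y
  · have hy0 : (0 : ℝ) < y := by exact_mod_cast hy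
    have hy1 : (1 : ℝ) ≤ y := by exact_mod_cast hy
    set τ : ℝ := (y * b₁ - x * a₁) / y with hτ
    have hτle : |τ| ≤ 2 * Real.exp (-(H / 2)) := by
      rw [hτ, abs_div, abs_of_pos hy0, abs_sub_comm, abs_of_pos hpos]
      exact (div_le_self hpos.le hy1).trans hsmall
    set N := K * L with hN
    have hN1 : (36000000 : ℝ) ≤ N := by linarith
    have hSK : (S : ℝ) ≤ K / 30 := by
      have : (S : ℝ) * 1 ≤ S * b₁ := by gcongr
      rw [hQ] at hSb
      linarith
    have hsm' : 8 * L * S * |τ| * Real.exp (N : ℕ) ≤ 1 := by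
      have h1 : (16 * L * S : ℝ) ≤ N := by
        have : (L : ℝ) * S ≤ L * (K / 30) := by gcongr
        have h0 : (0 : ℝ) ≤ L * K := by positivity
        rw [hN]; push_cast
        linarith
      have h2 : (N : ℝ) ≤ Real.exp N := by have := Real.add_one_le_exp (N : ℝ); linarith
      exact small_aux L S τ H N (by positivity) hτle (h1.trans h2) (by linarith)
    have hineq := real_ineq A B a₁ b₁ τ Q x y R S K L hA2 hB2 hAB hAe hBe hx hy hxy hKpos
      (by omega) (by rw [hτ]; field_simp) hsm' hRS hns hQ8
    rw [← hN] at hineq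
    have hRSpos : 0 < R * S := lt_of_lt_of_le (Nat.mul_pos hKpos (by omega)) hRS
    have hRpos : 0 < R := Nat.pos_of_mul_pos_right hRSpos
    have hZpos : (0 : ℝ) < 2 * R * y + 2 * S * x := by
      have : (0 : ℝ) < R := by exact_mod_cast hRpos
      positivity
    have hZle : (2 * R * y + 2 * S * x : ℝ) ≤ K * H := by
      refine hZm.trans ?_
      rw [div_le_iff₀ (by positivity), hQ]
      have h1 : (K : ℝ) * (x * a₁ + y * b₁) ≤ K * (2 * H) := by gcongr; linarith
      have h2 : (K : ℝ) * H * 1 ≤ K * H * (a₁ * b₁) := by gcongr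
      have h3 : (0 : ℝ) ≤ K * H := by positivity
      linarith
    have hlz := Real.log_le_log hZpos hZle
    have hlN := log_le_small (by linarith : (0 : ℝ) < N)
    have h3 : (K : ℝ) / 2 * (1 + Real.log (2 * R * y + 2 * S * x)) ≤ 0.2 * N := by
      have : 1 + Real.log (2 * R * y + 2 * S * x) ≤ 0.4 * L := by linarith
      calc _ ≤ (K : ℝ) / 2 * (0.4 * L) := by gcongr
        _ = _ := by rw [hN]; push_cast; ring
    have hE := Real.exp_one_lt_d9
    have hLN : (L : ℝ) * 360000 ≤ N := by
      have h0 : (L : ℝ) * 360000 ≤ L * K := by gcongr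
      rw [hN]; push_cast; linarith
    have h4 : (L : ℝ) / 2 * (Real.exp 1 * (8 * Q + 1)) ≤ 0.2 * N := by
      have hQ0 : 0 < Q := by rw [hQ]; positivity
      calc _ ≤ (L : ℝ) / 2 * (2.72 * (8 * Q + 1)) := by gcongr; linarith
        _ = 2.72 * 4 / 60 * N + 1.36 * L := by rw [hQ, hN]; push_cast; ring
        _ ≤ _ := by linarith
    linarith
  · obtain ⟨hxQ, hyQ⟩ := hsm hns
    have hlt : (B : ℝ) ^ y < (A : ℝ) ^ x := by
      rw [hAe, hBe, ← Real.exp_nat_mul, ← Real.exp_nat_mul]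
      apply Real.exp_lt_exp.mpr; linarith
    have hlt' : (B : ℝ) ^ y + 1 ≤ (A : ℝ) ^ x := by
      have : B ^ y < A ^ x := by exact_mod_cast hlt
      exact_mod_cast this
    have hA0' : 0 < (A : ℝ) ^ x := by positivity
    have hB0' : 0 < (B : ℝ) ^ y := by positivity
    have h1 := Real.one_sub_inv_le_log_of_pos (div_pos hA0' hB0')
    rw [Real.log_div hA0'.ne' hB0'.ne', Real.log_pow, Real.log_pow, inv_div] at h1
    have h2 : 1 / (A : ℝ) ^ x ≤ 1 - (B : ℝ) ^ y / (A : ℝ) ^ x := by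
      rw [le_sub_iff_add_le, ← add_div, div_le_one hA0']; linarith
    have h3 : Real.exp (-Q) ≤ 1 / (A : ℝ) ^ x := by
      rw [hAe, ← Real.exp_nat_mul, one_div, ← Real.exp_neg]
      apply Real.exp_le_exp.mpr; linarith
    have h4 : Real.exp (-Q) ≤ 2 * Real.exp (-(H / 2)) := by
      change _ ≤ (x : ℝ) * a₁ - y * b₁ at h1
      linarith
    have h5 : 2 * Real.exp (-(H / 2)) ≤ Real.exp (1 + -(H / 2)) := by
      rw [Real.exp_add]
      have := Real.add_one_le_exp (1 : ℝ)
      gcongr; linarith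
    have h6 := Real.exp_le_exp.mp (h4.trans h5)
    rw [hQ] at h6
    linarith

end ExpSum

/-! ### Solutions have bounded height -/

namespace ExpSum
open Finset

lemma gcd_split (u v : ℕ) (hu : 0 < u) : ∃ g x y : ℕ, 0 < g ∧ u = x * g ∧ v = y * g ∧ Nat.Coprime x y := by
  have hg : 0 < Nat.gcd u v := Nat.gcd_pos_of_pos_left v hu
  exact ⟨Nat.gcd u v, u / Nat.gcd u v, v / Nat.gcd u v, hg,
    (Nat.div_mul_cancel (Nat.gcd_dvd_left u v)).symm, (Nat.div_mul_cancel (Nat.gcd_dvd_right u v)).symm,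
    Nat.coprime_div_gcd_div_gcd hg⟩

lemma eight_dvd_sq_sub_one {p : ℕ} (hp : Odd p) : (8 : ℤ) ∣ ((p ^ 2 : ℕ) : ℤ) - 1 := by
  have := Int.eight_dvd_sq_sub_one_of_odd (k := (p : ℤ)) (by exact_mod_cast hp)
  push_cast
  exact this

/-- The 2-adic bound for exponents that need not be coprime: with `g = gcd (u, v)`, `two_adic_bound` is
applied to the exponents `u / g`, `v / g`, and lifting to the `g`-th powers costs only the
2-adic valuation of `g`, which is at most `L`. -/
lemma dyadic_exponent (p q u v w K L : ℕ) (H : ℝ) (hp : Odd p) (hq : Odd q)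
    (hpq : Nat.Coprime p q) (hlp : 1 ≤ Real.log p) (hlq : 1 ≤ Real.log q) (hu : 0 < u) (hv : 0 < v)
    (hL : 100 ≤ L) (hK : 3600 * L * (Real.log p * Real.log q) ≤ K)
    (hdvd : (2 : ℤ) ^ w ∣ (p : ℤ) ^ (2 * u) - (q : ℤ) ^ (2 * v))
    (hpH : u * Real.log p ≤ H) (hqH : v * Real.log q ≤ H)
    (hW : Real.log (K * H) + 1.4 ≤ 0.4 * L) : w < 3 * (K * L) := by
  obtain ⟨g, x, y, hg, rfl, rfl, hxy⟩ := gcd_split u v hu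
  have hx : 0 < x := Nat.pos_of_mul_pos_right hu
  have hy : 0 < y := Nat.pos_of_mul_pos_right hv
  have hp2 : 2 ≤ p := by
    by_contra h
    have h1 : p ≤ 1 := by omega
    have : Real.log p ≤ 0 := Real.log_nonpos (by positivity) (by exact_mod_cast h1)
    linarith
  have hq2 : 2 ≤ q := by
    by_contra h
    have h1 : q ≤ 1 := by omega
    have : Real.log q ≤ 0 := Real.log_nonpos (by positivity) (by exact_mod_cast h1)
    linarith
  have h8A := eight_dvd_sq_sub_one hp
  have h8B := eight_dvd_sq_sub_one hq
  set A : ℕ := p ^ 2 with hA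
  set B : ℕ := q ^ 2 with hB
  have hAB : Nat.Coprime A B := Nat.Coprime.pow 2 2 hpq
  have hlA : Real.log A = 2 * Real.log p := by rw [hA]; push_cast; rw [Real.log_pow]; norm_num
  have hlB : Real.log B = 2 * Real.log q := by rw [hB]; push_cast; rw [Real.log_pow]; norm_num
  have hA2 : 2 ≤ A := by rw [hA]; nlinarith
  have hB2 : 2 ≤ B := by rw [hB]; nlinarith
  have hg1 : (1 : ℝ) ≤ g := by exact_mod_cast hg
  push_cast at hpH hqH
  have hxle : (x : ℝ) ≤ x * g := le_mul_of_one_le_right (by positivity) hg1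
  have hyle : (y : ℝ) ≤ y * g := le_mul_of_one_le_right (by positivity) hg1
  have hxp : x * Real.log p ≤ H := le_trans (by gcongr) hpH
  have hyq : y * Real.log q ≤ H := le_trans (by gcongr) hqH
  have hbound : ∀ Z : ℕ, (2 : ℤ) ^ Z ∣ (A : ℤ) ^ x - (B : ℤ) ^ y → Z < 2 * (K * L) := fun Z hZ =>
    two_adic_bound A B H x y Z K L hA2 hB2 h8A h8B hAB (by linarith) (by linarith) hx hy hxy hL
      (by rw [hlA, hlB]; linarith) hZ (by rw [hlA]; linarith) (by rw [hlB]; linarith) hW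
  -- lifting the exponent from `x, y` to `x * g, y * g`
  have hmul : (p : ℤ) ^ (2 * (x * g)) - (q : ℤ) ^ (2 * (y * g)) =
      ((A : ℤ) ^ x) ^ g - ((B : ℤ) ^ y) ^ g := by
    rw [hA, hB]; push_cast
    rw [← pow_mul, ← pow_mul, ← pow_mul, ← pow_mul]
  rw [hmul] at hdvd
  have h4 : (4 : ℤ) ∣ (A : ℤ) ^ x - (B : ℤ) ^ y := by
    have h1 := h8A.trans (sub_one_dvd_pow_sub_one (A : ℤ) x)
    have h2 := h8B.trans (sub_one_dvd_pow_sub_one (B : ℤ) y)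
    have := dvd_sub h1 h2
    rw [sub_sub_sub_cancel_right] at this
    exact (by norm_num : (4 : ℤ) ∣ 8).trans this
  have hodd : ¬ (2 : ℤ) ∣ (A : ℤ) ^ x := by
    intro h
    have := Int.prime_two.dvd_of_dvd_pow h
    omega
  have hlte := Int.two_pow_sub_pow' g h4 hodd
  have hne : (A : ℤ) ^ x - (B : ℤ) ^ y ≠ 0 := by
    intro h0
    have := hbound (2 * (K * L)) (by rw [h0]; exact dvd_zero _)
    omega
  have hf1 : FiniteMultiplicity 2 ((A : ℤ) ^ x - (B : ℤ) ^ y) :=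
    Int.finiteMultiplicity_iff.mpr ⟨by decide, hne⟩
  have hf2 : FiniteMultiplicity 2 (g : ℤ) :=
    Int.finiteMultiplicity_iff.mpr ⟨by decide, by exact_mod_cast hg.ne'⟩
  have hle := pow_dvd_iff_le_emultiplicity.mp hdvd
  rw [hlte, hf1.emultiplicity_eq_multiplicity, hf2.emultiplicity_eq_multiplicity] at hle
  have hle' : w ≤ multiplicity 2 ((A : ℤ) ^ x - (B : ℤ) ^ y) + multiplicity 2 (g : ℤ) := by
    exact_mod_cast hle
  have h1 := hbound _ (pow_multiplicity_dvd 2 ((A : ℤ) ^ x - (B : ℤ) ^ y))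
  have h2 : (2 : ℤ) ^ multiplicity 2 (g : ℤ) ≤ g :=
    Int.le_of_dvd (by exact_mod_cast hg) (pow_multiplicity_dvd 2 (g : ℤ))
  have h2' : (2 : ℝ) ^ multiplicity 2 (g : ℤ) ≤ g := by exact_mod_cast h2
  have hLr : (100 : ℝ) ≤ L := by exact_mod_cast hL
  have hK1 : (1 : ℝ) ≤ K := by
    refine le_trans ?_ hK
    have : 1 ≤ Real.log p * Real.log q := one_le_mul_of_one_le_of_one_le hlp hlq
    nlinarith
  have hx1 : (1 : ℝ) ≤ x := by exact_mod_cast hx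
  have hgH : (g : ℝ) ≤ K * H := by
    have e1 : (g : ℝ) ≤ H := by
      calc (g : ℝ) ≤ x * g * Real.log p := by
            rw [mul_comm (x : ℝ), mul_assoc]
            exact le_mul_of_one_le_right (by positivity) (one_le_mul_of_one_le_of_one_le hx1 hlp)
        _ ≤ H := hpH
    have : (0 : ℝ) ≤ H := by linarith
    nlinarith
  have h3 := Real.log_le_log (by positivity) (h2'.trans hgH)
  rw [Real.log_pow] at h3
  have hlog2 : 0.69 < Real.log 2 := by have := Real.log_two_gt_d9; linarith
  have h4' : (multiplicity 2 (g : ℤ) : ℝ) * 0.69 ≤ multiplicity 2 (g : ℤ) * Real.log 2 := by gcongr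
  have h5 : (multiplicity 2 (g : ℤ) : ℝ) ≤ L := by linarith
  have h6 : multiplicity 2 (g : ℤ) ≤ L := by exact_mod_cast h5
  have h7 : 1 ≤ K := by exact_mod_cast hK1
  nlinarith

/-- A difference of powers `e = p ^ u - q ^ v` of size at most the square root of `p ^ u` makes
`u * log p - v * log q` tiny, so `real_bound` applies after dividing by `gcd (u, v)`. -/
lemma real_height (p q e u v K L : ℕ) (hpq : Nat.Coprime p q) (hlp : 1 ≤ Real.log p)
    (hlq : 1 ≤ Real.log q) (hu : 0 < u) (hv : 0 < v)
    (hL : 100 ≤ L) (hK : 3600 * L * (Real.log p * Real.log q) ≤ K)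
    (he : 2 ≤ e) (heq : e + q ^ v = p ^ u) (hsq : e ^ 2 ≤ p ^ u)
    (hW : Real.log (K * (u * Real.log p)) + 1.4 ≤ 0.4 * L) : u * Real.log p ≤ 4 * (K * L) := by
  set H := (u : ℝ) * Real.log p with hH
  obtain ⟨g, x, y, hg, rfl, rfl, hxy⟩ := gcd_split u v hu
  have hx : 0 < x := Nat.pos_of_mul_pos_right hu
  have hy : 0 < y := Nat.pos_of_mul_pos_right hv
  have hp2 : 2 ≤ p := by
    by_contra h
    have h1 : p ≤ 1 := by omega
    have : Real.log p ≤ 0 := Real.log_nonpos (by positivity) (by exact_mod_cast h1)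
    linarith
  have hq2 : 2 ≤ q := by
    by_contra h
    have h1 : q ≤ 1 := by omega
    have : Real.log q ≤ 0 := Real.log_nonpos (by positivity) (by exact_mod_cast h1)
    linarith
  have hp0 : (0 : ℝ) < p := by exact_mod_cast (by omega : 0 < p)
  have hq0 : (0 : ℝ) < q := by exact_mod_cast (by omega : 0 < q)
  have heqR : (e : ℝ) + (q : ℝ) ^ (y * g) = (p : ℝ) ^ (x * g) := by exact_mod_cast heq
  have hsqR : (e : ℝ) ^ 2 ≤ (p : ℝ) ^ (x * g) := by exact_mod_cast hsq
  have heR : (2 : ℝ) ≤ e := by exact_mod_cast he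
  have hpe : (p : ℝ) ^ (x * g) = Real.exp H := by
    rw [hH, ← Real.log_pow, Real.exp_log (by positivity)]
  set P : ℝ := (p : ℝ) ^ (x * g) with hP
  set T : ℝ := (q : ℝ) ^ (y * g) with hT
  have hT0 : 0 < T := by positivity
  have hP0 : 0 < P := by positivity
  have hTP : P ≤ 2 * T := by nlinarith
  have hΛ : ((x * g : ℕ) : ℝ) * Real.log p - ((y * g : ℕ) : ℝ) * Real.log q = Real.log (P / T) := by
    rw [Real.log_div hP0.ne' hT0.ne', hP, hT, Real.log_pow, Real.log_pow]
  have hΛpos : 0 < Real.log (P / T) := by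
    apply Real.log_pos
    rw [one_lt_div hT0]; linarith
  have hexph : Real.exp (H / 2) * Real.exp (H / 2) = P := by rw [← Real.exp_add, hpe]; ring_nf
  have he2 : (e : ℝ) ≤ Real.exp (H / 2) := by
    apply le_of_sq_le_sq _ (Real.exp_pos _).le
    rw [sq (Real.exp _), hexph]; exact hsqR
  have hΛle : Real.log (P / T) ≤ 2 * Real.exp (-(H / 2)) := by
    have h1 := Real.log_le_sub_one_of_pos (div_pos hP0 hT0)
    have h2 : P / T - 1 = e / T := by field_simp; linarith
    have h3 : e / T ≤ 2 * Real.exp (-(H / 2)) := by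
      rw [div_le_iff₀ hT0, Real.exp_neg]
      have h4 : Real.exp (H / 2) * (Real.exp (H / 2))⁻¹ = 1 := mul_inv_cancel₀ (Real.exp_pos _).ne'
      have h5 : 0 < (Real.exp (H / 2))⁻¹ := inv_pos.mpr (Real.exp_pos _)
      calc (e : ℝ) ≤ Real.exp (H / 2) := he2
        _ = P * (Real.exp (H / 2))⁻¹ := by rw [← hexph, mul_assoc, h4, mul_one]
        _ ≤ 2 * T * (Real.exp (H / 2))⁻¹ := by gcongr
        _ = _ := by ring
    linarith
  have hg1 : (1 : ℝ) ≤ g := by exact_mod_cast hg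
  have hscale : (g : ℝ) * (x * Real.log p - y * Real.log q) = Real.log (P / T) := by
    rw [← hΛ]; push_cast; ring
  have hpos : 0 < x * Real.log p - y * Real.log q := by
    by_contra h
    push Not at h
    have := mul_nonpos_of_nonneg_of_nonpos (by linarith : (0 : ℝ) ≤ g) h
    linarith
  have hle : x * Real.log p - y * Real.log q ≤ Real.log (P / T) := by
    rw [← hscale]; exact le_mul_of_one_le_left hpos.le hg1
  refine real_bound p q H x y K L hp2 hq2 hpq hlp hlq hx hy hxy hL hK hpos (hle.trans hΛle) ?_ hW
  rw [hH]; push_cast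
  have hxle : (x : ℝ) ≤ x * g := le_mul_of_one_le_right (by positivity) hg1
  gcongr

end ExpSum

namespace ExpSum
open Finset

lemma exp_dominates {ξ : ℝ} (hξ : 22 ≤ ξ) : 21606 * (10 * ξ + 1) ^ 2 ≤ Real.exp ξ := by
  have h1 : (3090000000 : ℝ) ≤ Real.exp 22 := by
    have h := Real.exp_one_gt_d9
    have h2 : Real.exp 22 = Real.exp 1 ^ 22 := by rw [← Real.exp_nat_mul]; norm_num
    rw [h2]
    calc (3090000000 : ℝ) ≤ (2.7 : ℝ) ^ 22 := by norm_num
      _ ≤ _ := by gcongr; linarith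
  have h2 : 1 + (ξ - 22) + (ξ - 22) ^ 2 / 2 ≤ Real.exp (ξ - 22) :=
    Real.quadratic_le_exp_of_nonneg (by linarith)
  have h3 : Real.exp ξ = Real.exp 22 * Real.exp (ξ - 22) := by rw [← Real.exp_add]; ring_nf
  have h4 : 3090000000 * (1 + (ξ - 22) + (ξ - 22) ^ 2 / 2) ≤ Real.exp 22 * Real.exp (ξ - 22) :=
    mul_le_mul h1 h2 (by nlinarith [sq_nonneg (ξ - 22)]) (Real.exp_pos _).le
  rw [h3]
  nlinarith [sq_nonneg (ξ - 22)]

/-- The choice of the auxiliary parameters `K, L` in the interpolation determinants. -/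
lemma params (ξ α β ε : ℝ) (hξ : 22 ≤ ξ) (hα : 1 ≤ α) (hβ : 1 ≤ β) (hε : 0.69 ≤ ε)
    (hα3 : α ≤ 3 * ξ) (hβ3 : β ≤ 3 * ξ) (hε3 : ε ≤ 3 * ξ) :
    ∃ K L : ℕ, 100 ≤ L ∧ 3600 * L * (α * β) ≤ K ∧
      Real.log (K * (Real.exp ξ * α * β * ε)) + 1.4 ≤ 0.4 * L ∧
      6 * ((K : ℝ) * L) ≤ Real.exp ξ * α * β ∧ 0 < (K : ℝ) * L := by
  obtain ⟨L, hL⟩ : ∃ L : ℕ, L = ⌈10 * ξ⌉₊ := ⟨_, rfl⟩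
  have hL1 : 10 * ξ ≤ L := by rw [hL]; exact Nat.le_ceil _
  have hL2 : (L : ℝ) < 10 * ξ + 1 := by rw [hL]; exact Nat.ceil_lt_add_one (by linarith)
  obtain ⟨K, hK⟩ : ∃ K : ℕ, K = ⌈3600 * L * (α * β)⌉₊ := ⟨_, rfl⟩
  have hαβ : 1 ≤ α * β := one_le_mul_of_one_le_of_one_le hα hβ
  have hLαβ : (L : ℝ) ≤ L * (α * β) := le_mul_of_one_le_right (by positivity) hαβ
  have hK1 : 3600 * L * (α * β) ≤ K := by rw [hK]; exact Nat.le_ceil _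
  have hK2 : (K : ℝ) ≤ 3601 * (L * (α * β)) := by
    have : (K : ℝ) < 3600 * L * (α * β) + 1 := by
      rw [hK]; exact Nat.ceil_lt_add_one (by nlinarith)
    nlinarith
  have hK0 : (0 : ℝ) < K := by nlinarith
  have hL0 : (0 : ℝ) < L := by linarith
  have hX := Real.exp_pos ξ
  refine ⟨K, L, ?_, hK1, ?_, ?_, by positivity⟩
  · have : (100 : ℝ) ≤ L := by linarith
    exact_mod_cast this
  · have e1 : (K : ℝ) ≤ 3601 * ((11 * ξ) * (3 * ξ * (3 * ξ))) := by
      refine hK2.trans ?_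
      gcongr
      linarith
    have e2 : Real.exp ξ * α * β * ε ≤ Real.exp ξ * (3 * ξ) * (3 * ξ) * (3 * ξ) := by
      gcongr
    have e3 : (K : ℝ) * (Real.exp ξ * α * β * ε) ≤ 2 ^ 24 * ξ ^ 6 * Real.exp ξ := by
      calc (K : ℝ) * (Real.exp ξ * α * β * ε)
          ≤ (3601 * ((11 * ξ) * (3 * ξ * (3 * ξ)))) * (Real.exp ξ * (3 * ξ) * (3 * ξ) * (3 * ξ)) := by
            gcongr
        _ = (3601 * 11 * 243) * (ξ ^ 6 * Real.exp ξ) := by ring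
        _ ≤ 2 ^ 24 * (ξ ^ 6 * Real.exp ξ) := by gcongr; norm_num
        _ = _ := by ring
    have e4 := Real.log_le_log (by positivity) e3
    rw [Real.log_mul (x := 2 ^ 24 * ξ ^ 6) (by positivity) (by positivity),
      Real.log_mul (x := 2 ^ 24) (by positivity) (by positivity),
      Real.log_exp, Real.log_pow, Real.log_pow] at e4
    have hl2 : Real.log 2 < 0.6932 := by have := Real.log_two_lt_d9; linarith
    have e5 : Real.log ξ ≤ 5 * Real.log 2 + (ξ / 32 - 1) := by
      have h1 := Real.log_le_sub_one_of_pos (show 0 < ξ / 32 by positivity)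
      rw [Real.log_div (by positivity) (by norm_num), show (32 : ℝ) = 2 ^ 5 by norm_num,
        Real.log_pow] at h1
      push_cast at h1
      norm_num at h1 ⊢
      linarith
    push_cast at e4
    linarith
  · have h1 : (K : ℝ) * L ≤ 3601 * ((10 * ξ + 1) * (α * β)) * (10 * ξ + 1) := by
      refine mul_le_mul (hK2.trans ?_) hL2.le hL0.le (by positivity)
      gcongr
    have h2 := exp_dominates hξ
    have h3 := mul_le_mul_of_nonneg_right h2 (by linarith : 0 ≤ α * β)
    linarith

/-- No relation between two odd bases `p, q` and an even base `E` has height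
`exp ξ * log p * log q * log E` with `ξ ≥ 22`: a large power of `E` is excluded 2-adically,
a small one by the archimedean estimate. -/
lemma odd_pair (p q E u v w : ℕ) (ξ H : ℝ) (hp : Odd p) (hq : Odd q) (hpq : Nat.Coprime p q)
    (hlp : 1 ≤ Real.log p) (hlq : 1 ≤ Real.log q) (hE : Even E) (hE2 : 2 ≤ E)
    (hu : 0 < u) (hv : 0 < v) (hw : 0 < w) (hξ : 22 ≤ ξ)
    (hp3 : Real.log p ≤ 3 * ξ) (hq3 : Real.log q ≤ 3 * ξ) (hE3 : Real.log E ≤ 3 * ξ)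
    (hH : H = Real.exp ξ * Real.log p * Real.log q * Real.log E)
    (hdvd : (E : ℤ) ^ w ∣ (p : ℤ) ^ (2 * u) - (q : ℤ) ^ (2 * v))
    (hpH : u * Real.log p ≤ H) (hqH : v * Real.log q ≤ H)
    (h : H / 2 ≤ w * Real.log E ∨
      (E ^ w + q ^ v = p ^ u ∧ H = u * Real.log p ∧ (E ^ w) ^ 2 ≤ p ^ u)) : False := by
  have hlE : 0.69 ≤ Real.log E := by
    have h1 : Real.log 2 ≤ Real.log E := Real.log_le_log (by norm_num) (by exact_mod_cast hE2)
    have := Real.log_two_gt_d9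
    linarith
  obtain ⟨K, L, hL, hK, hW, hN, hN0⟩ := params ξ _ _ _ hξ hlp hlq hlE hp3 hq3 hE3
  rw [← hH] at hW
  have hX := Real.exp_pos ξ
  have hαβ : 0 < Real.exp ξ * Real.log p * Real.log q := by positivity
  rcases h with h | ⟨h1, h2, h3⟩
  · have h2w : (2 : ℤ) ^ w ∣ (p : ℤ) ^ (2 * u) - (q : ℤ) ^ (2 * v) := by
      refine (pow_dvd_pow_of_dvd ?_ w).trans hdvd
      exact_mod_cast hE.two_dvd
    have hw' := dyadic_exponent p q u v w K L H hp hq hpq hlp hlq hu hv hL hK h2w hpH hqH hW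
    have hw2 : (w : ℝ) < 3 * (K * L) := by exact_mod_cast hw'
    have h4 : Real.exp ξ * Real.log p * Real.log q ≤ 2 * w := by
      have h5 : (Real.exp ξ * Real.log p * Real.log q) * Real.log E ≤ (2 * w) * Real.log E := by
        rw [← hH]; linarith
      exact le_of_mul_le_mul_right h5 (by linarith)
    linarith
  · rw [h2] at hW
    have h4 := real_height p q (E ^ w) u v K L hpq hlp hlq hu hv hL hK
      (hE2.trans (Nat.le_self_pow hw.ne' E)) h1 h3 hW
    rw [← h2, hH] at h4
    have h5 : Real.exp ξ * Real.log p * Real.log q * 0.69 ≤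
      Real.exp ξ * Real.log p * Real.log q * Real.log E := by gcongr
    linarith

lemma one_le_log_of_three_le {n : ℕ} (hn : 3 ≤ n) : 1 ≤ Real.log n := by
  rw [Real.le_log_iff_exp_le (by positivity)]
  have h := Real.exp_one_lt_d9
  have : (3 : ℝ) ≤ n := by exact_mod_cast hn
  linarith

lemma three_le_of_odd {n : ℕ} (hn : Odd n) (h2 : 2 ≤ n) : 3 ≤ n := by
  obtain ⟨k, rfl⟩ := hn; omega

/-- The case in which the base of the right-hand side is odd; `a` is the even one. -/
lemma no_large_height_even_left (a b c x y z : ℕ) (ξ : ℝ) (ha : 2 ≤ a) (hb : 2 ≤ b) (hc : 2 ≤ c)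
    (hab : Nat.Coprime a b) (hac : Nat.Coprime a c) (hbc : Nat.Coprime b c)
    (hx : 0 < x) (hy : 0 < y) (hz : 0 < z) (heq : a ^ x + b ^ y = c ^ z) (hξ : 22 ≤ ξ)
    (ha3 : Real.log a ≤ 3 * ξ) (hb3 : Real.log b ≤ 3 * ξ) (hc3 : Real.log c ≤ 3 * ξ)
    (hH : z * Real.log c = Real.exp ξ * Real.log a * Real.log b * Real.log c)
    (hE : Even a) : False := by
  have hbo : Odd b := by
    rw [← Nat.not_even_iff_odd]; intro h
    exact Nat.not_coprime_of_dvd_of_dvd (by norm_num : 1 < 2) hE.two_dvd h.two_dvd hab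
  have hco : Odd c := by
    rw [← Nat.not_even_iff_odd]; intro h
    exact Nat.not_coprime_of_dvd_of_dvd (by norm_num : 1 < 2) hE.two_dvd h.two_dvd hac
  have ha0 : (0 : ℝ) < a := by exact_mod_cast (by omega : 0 < a)
  have hb0 : (0 : ℝ) < b := by exact_mod_cast (by omega : 0 < b)
  have hc0 : (0 : ℝ) < c := by exact_mod_cast (by omega : 0 < c)
  have hR : (a : ℝ) ^ x + (b : ℝ) ^ y = (c : ℝ) ^ z := by exact_mod_cast heq
  have hbH : y * Real.log b ≤ z * Real.log c := by
    rw [← Real.log_pow, ← Real.log_pow]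
    exact Real.log_le_log (by positivity) (by have : 0 < (a : ℝ) ^ x := by positivity
                                              linarith)
  refine odd_pair c b a z y x ξ (z * Real.log c) hco hbo hbc.symm
    (one_le_log_of_three_le (three_le_of_odd hco hc)) (one_le_log_of_three_le (three_le_of_odd hbo hb))
    hE ha hz hy hx hξ hc3 hb3 ha3 (by rw [hH]; ring) ?_ le_rfl hbH ?_
  · have hZ : (a : ℤ) ^ x = (c : ℤ) ^ z - (b : ℤ) ^ y := by
      rw [eq_sub_iff_add_eq]; exact_mod_cast heq
    exact ⟨(c : ℤ) ^ z + (b : ℤ) ^ y, by rw [hZ]; ring⟩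
  · rcases le_or_gt (z * Real.log c / 2) (x * Real.log a) with h | h
    · exact Or.inl h
    · refine Or.inr ⟨heq, rfl, ?_⟩
      have h1 : Real.log (((a : ℝ) ^ x) ^ 2) ≤ Real.log ((c : ℝ) ^ z) := by
        rw [Real.log_pow, Real.log_pow, Real.log_pow]; push_cast; linarith
      have h2 := (Real.log_le_log_iff (by positivity) (by positivity)).mp h1
      exact_mod_cast h2

/-- No solution has height `z * log c` equal to `exp ξ * log a * log b * log c` with `ξ ≥ 22`,
provided that the three logarithms are at most `3 * ξ`. -/
lemma no_large_height (a b c x y z : ℕ) (ξ : ℝ) (ha : 2 ≤ a) (hb : 2 ≤ b) (hc : 2 ≤ c)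
    (hab : Nat.Coprime a b) (hac : Nat.Coprime a c) (hbc : Nat.Coprime b c)
    (hx : 0 < x) (hy : 0 < y) (hz : 0 < z) (heq : a ^ x + b ^ y = c ^ z) (hξ : 22 ≤ ξ)
    (ha3 : Real.log a ≤ 3 * ξ) (hb3 : Real.log b ≤ 3 * ξ) (hc3 : Real.log c ≤ 3 * ξ)
    (hH : z * Real.log c = Real.exp ξ * Real.log a * Real.log b * Real.log c) : False := by
  rcases Nat.even_or_odd a with hae | hao
  · exact no_large_height_even_left a b c x y z ξ ha hb hc hab hac hbc hx hy hz heq hξ ha3 hb3 hc3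
      hH hae
  rcases Nat.even_or_odd b with hbe | hbo
  · exact no_large_height_even_left b a c y x z ξ hb ha hc hab.symm hbc hac hy hx hz
      (by rw [← heq]; ring) hξ hb3 ha3 hc3 (by rw [hH]; ring) hbe
  have hce : Even c := by
    have h1 : Even (c ^ z) := by rw [← heq]; exact (hao.pow).add_odd (hbo.pow)
    exact (Nat.even_pow.mp h1).1
  have ha0 : (0 : ℝ) < a := by exact_mod_cast (by omega : 0 < a)
  have hb0 : (0 : ℝ) < b := by exact_mod_cast (by omega : 0 < b)
  have hc0 : (0 : ℝ) < c := by exact_mod_cast (by omega : 0 < c)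
  have hR : (a : ℝ) ^ x + (b : ℝ) ^ y = (c : ℝ) ^ z := by exact_mod_cast heq
  have hA : 0 < (a : ℝ) ^ x := by positivity
  have hB : 0 < (b : ℝ) ^ y := by positivity
  have haH : x * Real.log a ≤ z * Real.log c := by
    rw [← Real.log_pow, ← Real.log_pow]
    exact Real.log_le_log hA (by linarith)
  have hbH : y * Real.log b ≤ z * Real.log c := by
    rw [← Real.log_pow, ← Real.log_pow]
    exact Real.log_le_log hB (by linarith)
  have hcH : 0 ≤ z * Real.log c := by have := Real.log_natCast_nonneg c; positivity
  refine odd_pair a b c x y z ξ (z * Real.log c) hao hbo hab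
    (one_le_log_of_three_le (three_le_of_odd hao ha)) (one_le_log_of_three_le (three_le_of_odd hbo hb))
    hce hc hx hy hz hξ ha3 hb3 hc3 hH ?_ haH hbH (Or.inl (by linarith))
  have hZ : (c : ℤ) ^ z = (a : ℤ) ^ x + (b : ℤ) ^ y := by exact_mod_cast heq.symm
  exact ⟨(a : ℤ) ^ x - (b : ℤ) ^ y, by rw [hZ]; ring⟩

end ExpSum

/-! ### The gap principle -/

namespace ExpSum
open Finset

/-- Lifting the exponent for the squares of `P` and `Q`, in a form uniform in the prime. At `p = 2`,
the condition `4 ∣ N = P - Q` makes `P + Q` exactly divisible by `2`, whence the factor `2`. -/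
lemma emultiplicity_sq_pow_sub (p : ℕ) (hp : p.Prime) (N P Q : ℤ) (hN : N = P - Q)
    (hpN : (p : ℤ) ∣ N) (hQ : ¬ (p : ℤ) ∣ Q) (h4 : p = 2 → (4 : ℤ) ∣ N) (n : ℕ) :
    emultiplicity (p : ℤ) ((P ^ 2) ^ n - (Q ^ 2) ^ n) = emultiplicity (p : ℤ) (2 * n * N) := by
  have hpZ : Prime (p : ℤ) := Nat.prime_iff_prime_int.mp hp
  have hP : ¬ (p : ℤ) ∣ P := by
    intro h
    apply hQ
    have := dvd_sub h hpN
    rwa [hN, sub_sub_cancel] at this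
  have hP2 : ¬ (p : ℤ) ∣ P ^ 2 := fun h => hP (hpZ.dvd_of_dvd_pow h)
  have hfac : P ^ 2 - Q ^ 2 = N * (N + 2 * Q) := by rw [hN]; ring
  have hdvd : N ∣ P ^ 2 - Q ^ 2 := ⟨_, hfac⟩
  have hlte : emultiplicity (p : ℤ) ((P ^ 2) ^ n - (Q ^ 2) ^ n) =
      emultiplicity (p : ℤ) (P ^ 2 - Q ^ 2) + emultiplicity (p : ℤ) n := by
    rcases hp.eq_two_or_odd' with rfl | hodd
    · exact Int.two_pow_sub_pow' n ((h4 rfl).trans hdvd) hP2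
    · rw [Int.emultiplicity_pow_sub_pow hp hodd (hpN.trans hdvd) hP2, Int.natCast_emultiplicity]
  have hsecond : emultiplicity (p : ℤ) (N + 2 * Q) = emultiplicity (p : ℤ) 2 := by
    rcases hp.eq_two_or_odd' with rfl | hodd
    · obtain ⟨k, hk⟩ := h4 rfl
      have : N + 2 * Q = 2 * (2 * k + Q) := by rw [hk]; ring
      rw [this, emultiplicity_mul hpZ]
      have h0 : emultiplicity ((2 : ℕ) : ℤ) (2 * k + Q) = 0 := by
        rw [emultiplicity_eq_zero]
        intro h
        exact hQ ((dvd_add_right (Dvd.intro k rfl)).mp h)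
      rw [h0, add_zero]
    · have h2 : ¬ (p : ℤ) ∣ 2 := by
        intro h
        have h' : p ∣ 2 := by exact_mod_cast h
        have := (Nat.prime_dvd_prime_iff_eq hp Nat.prime_two).mp h'
        subst this
        exact absurd hodd (by decide)
      rw [emultiplicity_eq_zero.mpr h2, emultiplicity_eq_zero]
      intro h
      rcases hpZ.dvd_or_dvd ((dvd_add_right hpN).mp h) with h | h
      · exact h2 h
      · exact hQ h
  rw [hlte, hfac, emultiplicity_mul hpZ, hsecond, emultiplicity_mul hpZ, emultiplicity_mul hpZ]
  ring

/-- The global form of `emultiplicity_sq_pow_sub`. -/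
lemma dvd_sq_pow_sub_iff (d : ℕ) (N P Q : ℤ) (hN : N = P - Q)
    (hd : ∀ p : ℕ, p.Prime → p ∣ d → (p : ℤ) ∣ N ∧ ¬ (p : ℤ) ∣ Q) (h4 : 2 ∣ d → (4 : ℤ) ∣ N)
    (n : ℕ) : (d : ℤ) ∣ (P ^ 2) ^ n - (Q ^ 2) ^ n ↔ (d : ℤ) ∣ 2 * n * N := by
  rw [Int.natCast_dvd, Int.natCast_dvd, Nat.dvd_iff_prime_pow_dvd_dvd, Nat.dvd_iff_prime_pow_dvd_dvd]
  refine forall_congr' fun p => forall_congr' fun k => forall_congr' fun hp => ?_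
  refine forall_congr' fun hpk => ?_
  rcases Nat.eq_zero_or_pos k with rfl | hk
  · simp
  have hpd : p ∣ d := (dvd_pow_self p hk.ne').trans hpk
  obtain ⟨h1, h2⟩ := hd p hp hpd
  rw [← Int.natCast_dvd, ← Int.natCast_dvd]
  push_cast
  rw [pow_dvd_iff_le_emultiplicity, pow_dvd_iff_le_emultiplicity,
    emultiplicity_sq_pow_sub p hp N P Q hN h1 h2 (by rintro rfl; exact h4 hpd)]

/-- If `k > m` and `2 * n * M ^ m` is divisible by `M ^ k`, or only by its odd part in case `M` is even
and `4 ∤ M ^ m`, then `M ∣ 2 * n`: in the exceptional case `m = 1` and `M` is twice an odd number, and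
the missing factor `2` is the one in `2 * n`. -/
lemma dvd_two_mul_of_test (M m k n : ℕ) (hM : 2 ≤ M) (hm : 0 < m) (hmk : m < k)
    (h : ∀ d : ℕ, d ∣ M ^ k → (∀ p : ℕ, p.Prime → p ∣ d → p ∣ M) → (2 ∣ d → 4 ∣ M ^ m) →
      d ∣ 2 * n * M ^ m) : M ∣ 2 * n := by
  have hM0 : 0 < M := by omega
  by_cases hg : 2 ∣ M → 4 ∣ M ^ m
  · have h1 := h (M ^ k) dvd_rfl (fun p hp hpd => hp.dvd_of_dvd_pow hpd)
      (fun h2 => hg (Nat.prime_two.dvd_of_dvd_pow h2))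
    have h2 : M ^ m * M ∣ M ^ m * (2 * n) := by
      rw [← pow_succ, mul_comm (M ^ m)]
      exact (pow_dvd_pow M hmk).trans h1
    exact Nat.dvd_of_mul_dvd_mul_left (by positivity) h2
  · push Not at hg
    obtain ⟨⟨M', rfl⟩, h4⟩ := hg
    have hodd : ¬ 2 ∣ M' := by
      rintro ⟨r, rfl⟩
      exact h4 (Dvd.dvd.trans ⟨r, by ring⟩ (dvd_pow_self (2 * (2 * r)) hm.ne'))
    have h1 := h (M' ^ k) (pow_dvd_pow_of_dvd ⟨2, by ring⟩ k)
      (fun p hp hpd => (hp.dvd_of_dvd_pow hpd).mul_left 2)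
      (fun h2 => absurd (Nat.prime_two.dvd_of_dvd_pow h2) hodd)
    have h2 : M' ^ m * M' ∣ M' ^ m * (2 ^ (m + 1) * n) := by
      rw [← pow_succ]
      refine ((pow_dvd_pow M' hmk).trans h1).trans ⟨1, ?_⟩
      rw [mul_pow, pow_succ]; ring
    have h3 : M' ∣ 2 ^ (m + 1) * n :=
      Nat.dvd_of_mul_dvd_mul_left (pow_pos (by omega) m) h2
    have h5 : Nat.Coprime M' (2 ^ (m + 1)) :=
      Nat.Coprime.pow_right _ ((Nat.Prime.coprime_iff_not_dvd Nat.prime_two).mpr hodd).symm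
    exact Nat.mul_dvd_mul_left 2 (h5.dvd_of_dvd_mul_left h3)

end ExpSum

namespace ExpSum
open Finset

/-- The divisibility test attached to a solution of `M ^ m = s ^ x ± t ^ y`. -/
lemma solution_test (M s t m x y : ℕ) (σ : ℤ) (hσ : σ = 1 ∨ σ = -1) (htM : Nat.Coprime t M)
    (hm : 0 < m) (h : (M : ℤ) ^ m = (s : ℤ) ^ x + σ * (t : ℤ) ^ y) (d n : ℕ)
    (hd : ∀ p : ℕ, p.Prime → p ∣ d → p ∣ M) (h4 : 2 ∣ d → 4 ∣ M ^ m) :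
    (d : ℤ) ∣ (((s : ℤ) ^ 2) ^ x) ^ n - (((t : ℤ) ^ 2) ^ y) ^ n ↔ d ∣ 2 * n * M ^ m := by
  have hσ2 : σ ^ 2 = 1 := by rcases hσ with rfl | rfl <;> norm_num
  have key := dvd_sq_pow_sub_iff d ((M : ℤ) ^ m) ((s : ℤ) ^ x) (-σ * (t : ℤ) ^ y)
    (by rw [h]; ring) ?_ (fun h2 => by exact_mod_cast h4 h2) n
  · have e1 : ((s : ℤ) ^ x) ^ 2 = ((s : ℤ) ^ 2) ^ x := by rw [← pow_mul, ← pow_mul, mul_comm]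
    have e2 : (-σ * (t : ℤ) ^ y) ^ 2 = ((t : ℤ) ^ 2) ^ y := by
      rw [mul_pow, neg_sq, hσ2, one_mul, ← pow_mul, ← pow_mul, mul_comm]
    rw [e1, e2] at key
    rw [key]
    exact_mod_cast Iff.rfl
  · intro p hp hpd
    have hpM := hd p hp hpd
    refine ⟨by exact_mod_cast hpM.trans (dvd_pow_self M hm.ne'), fun hQ => ?_⟩
    have h1 : (p : ℤ) ∣ (t : ℤ) ^ y := by
      rcases hσ with rfl | rfl <;> simpa using hQ
    have h2 : p ∣ t := hp.dvd_of_dvd_pow (by exact_mod_cast h1)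
    exact Nat.not_coprime_of_dvd_of_dvd hp.one_lt h2 hpM htM

/-- Cramer's rule for two multiplicative relations. -/
lemma group_pow_eq_one {G : Type*} [CommGroup G] (u w : G) (x y x' y' D : ℕ)
    (h : u ^ x = w ^ y) (h' : u ^ x' = w ^ y') (hD : x * y' = x' * y + D) :
    u ^ D = 1 ∧ w ^ D = 1 := by
  constructor
  · have h1 : u ^ (x * y') = u ^ (x' * y) := by
      rw [pow_mul, h, pow_mul, h', ← pow_mul, ← pow_mul, mul_comm]
    rw [hD, pow_add] at h1
    exact mul_eq_left.mp h1
  · have h1 : w ^ (y' * x) = w ^ (y * x') := by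
      rw [pow_mul, ← h', pow_mul, ← h, ← pow_mul, ← pow_mul, mul_comm]
    rw [mul_comm y', hD, mul_comm y, pow_add] at h1
    exact mul_eq_left.mp h1

/-- A solution gives a multiplicative relation between the squares of `s` and `t` modulo powers
of `M`. -/
lemma unit_relation (M s t m x y k : ℕ) (σ : ℤ) (hσ : σ = 1 ∨ σ = -1)
    (h : (M : ℤ) ^ m = (s : ℤ) ^ x + σ * (t : ℤ) ^ y) (hk : k ≤ m)
    (u w : (ZMod (M ^ k))ˣ) (hu : (u : ZMod (M ^ k)) = (s : ZMod (M ^ k)) ^ 2)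
    (hw : (w : ZMod (M ^ k)) = (t : ZMod (M ^ k)) ^ 2) : u ^ x = w ^ y := by
  have hσ2 : σ ^ 2 = 1 := by rcases hσ with rfl | rfl <;> norm_num
  have h1 : ((M ^ k : ℕ) : ℤ) ∣ ((s : ℤ) ^ 2) ^ x - ((t : ℤ) ^ 2) ^ y := by
    have h2 : ((s : ℤ) ^ 2) ^ x - ((t : ℤ) ^ 2) ^ y =
        (M : ℤ) ^ m * ((s : ℤ) ^ x - σ * (t : ℤ) ^ y) := by
      rw [h, pow_right_comm, pow_right_comm (t : ℤ)]
      linear_combination (((t : ℤ) ^ y) ^ 2) * hσ2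
    rw [h2]
    push_cast
    exact (pow_dvd_pow _ hk).mul_right _
  have h3 := (ZMod.intCast_zmod_eq_zero_iff_dvd _ _).mpr h1
  push_cast at h3
  ext
  push_cast
  rw [hu, hw]
  exact sub_eq_zero.mp h3

/-- Three solutions, the exponent of `M` being strictly smallest in the first one. The determinant
`D = x₂ * y₃ - x₃ * y₂` annihilates the squares of `s` and `t` modulo `M ^ (m₁ + 1)`. -/
lemma gap_of_lt (M s t : ℕ) (σ : ℤ) (hσ : σ = 1 ∨ σ = -1) (hM : 2 ≤ M)
    (hsM : Nat.Coprime s M) (htM : Nat.Coprime t M)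
    (m₁ x₁ y₁ m₂ x₂ y₂ m₃ x₃ y₃ D : ℕ) (hm : 0 < m₁)
    (h₁ : (M : ℤ) ^ m₁ = (s : ℤ) ^ x₁ + σ * (t : ℤ) ^ y₁)
    (h₂ : (M : ℤ) ^ m₂ = (s : ℤ) ^ x₂ + σ * (t : ℤ) ^ y₂)
    (h₃ : (M : ℤ) ^ m₃ = (s : ℤ) ^ x₃ + σ * (t : ℤ) ^ y₃)
    (h12 : m₁ < m₂) (h13 : m₁ < m₃) (hD : x₂ * y₃ = x₃ * y₂ + D) : M ∣ 2 * D := by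
  refine dvd_two_mul_of_test M m₁ (m₁ + 1) D hM hm (Nat.lt_succ_self _) fun d hdk hdM h4 => ?_
  rw [← solution_test M s t m₁ x₁ y₁ σ hσ htM hm h₁ d D hdM h4]
  have hdk' : (d : ℤ) ∣ ((M ^ (m₁ + 1) : ℕ) : ℤ) := by exact_mod_cast hdk
  refine hdk'.trans ?_
  set n := M ^ (m₁ + 1) with hn
  have hsn : Nat.Coprime (s ^ 2) n := Nat.Coprime.pow _ _ hsM
  have htn : Nat.Coprime (t ^ 2) n := Nat.Coprime.pow _ _ htM
  obtain ⟨hu, hw⟩ := group_pow_eq_one (ZMod.unitOfCoprime _ hsn) (ZMod.unitOfCoprime _ htn)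
    x₂ y₂ x₃ y₃ D
    (unit_relation M s t m₂ x₂ y₂ _ σ hσ h₂ h12 _ _ (by simp) (by simp))
    (unit_relation M s t m₃ x₃ y₃ _ σ hσ h₃ h13 _ _ (by simp) (by simp)) hD
  have hu' := congrArg Units.val hu
  have hw' := congrArg Units.val hw
  rw [← ZMod.intCast_zmod_eq_zero_iff_dvd]
  push_cast at hu' hw' ⊢
  simp only [ZMod.coe_unitOfCoprime, Nat.cast_pow] at hu' hw'
  rw [pow_right_comm _ x₁ D, pow_right_comm _ y₁ D, hu', hw', one_pow, one_pow, sub_self]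

/-- Two solutions with proportional exponents of `s` and `t`. -/
lemma gap_of_proportional (M s t : ℕ) (σ : ℤ) (hσ : σ = 1 ∨ σ = -1) (hM : 2 ≤ M)
    (htM : Nat.Coprime t M) (m x y m' x' y' : ℕ) (hm : 0 < m)
    (h : (M : ℤ) ^ m = (s : ℤ) ^ x + σ * (t : ℤ) ^ y)
    (h' : (M : ℤ) ^ m' = (s : ℤ) ^ x' + σ * (t : ℤ) ^ y')
    (hlt : m < m') (hD : x * y' = x' * y) : M ∣ 2 * x' := by
  refine dvd_two_mul_of_test M m m' x' hM hm hlt fun d hdk hdM h4 => ?_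
  rw [← solution_test M s t m x y σ hσ htM hm h d x' hdM h4]
  have h4' : 2 ∣ d → 4 ∣ M ^ m' := fun h2 => (h4 h2).trans (pow_dvd_pow M hlt.le)
  have := (solution_test M s t m' x' y' σ hσ htM (hm.trans hlt) h' d x hdM h4').mpr
    (hdk.mul_left _)
  rw [← pow_mul ((s : ℤ) ^ 2), ← pow_mul ((t : ℤ) ^ 2)] at this ⊢
  rwa [mul_comm x x', mul_comm y x', ← hD, mul_comm x y']

/-- Among solutions with the same power of `M` and proportional exponents, none has a larger exponent of
`s` than another; by symmetry they coincide. -/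
lemma not_proportional (M s t : ℕ) (σ : ℤ) (hσ : σ = 1 ∨ σ = -1) (hs : 2 ≤ s) (ht : 2 ≤ t)
    (hM : 0 < M) (m x y x' y' : ℕ) (hy : 0 < y)
    (h : (M : ℤ) ^ m = (s : ℤ) ^ x + σ * (t : ℤ) ^ y)
    (h' : (M : ℤ) ^ m = (s : ℤ) ^ x' + σ * (t : ℤ) ^ y')
    (hD : x * y' = x' * y) : x' ≤ x := by
  by_contra hlt
  push Not at hlt
  have hylt : y < y' := by
    by_contra hge
    push Not at hge
    have : x * y' < x' * y := by nlinarith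
    omega
  obtain ⟨k, rfl⟩ := Nat.exists_eq_add_of_lt hlt
  obtain ⟨l, rfl⟩ := Nat.exists_eq_add_of_lt hylt
  have hkl : (k + 1) * y = (l + 1) * x := by nlinarith
  have hs0 : (0 : ℤ) < (s : ℤ) ^ x := by positivity
  have ht0 : (0 : ℤ) < (t : ℤ) ^ y := by positivity
  have hs1 : (1 : ℤ) < (s : ℤ) ^ (k + 1) := one_lt_pow₀ (by exact_mod_cast hs) (by omega)
  have ht1 : (1 : ℤ) < (t : ℤ) ^ (l + 1) := one_lt_pow₀ (by exact_mod_cast ht) (by omega)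
  have e1 : (s : ℤ) ^ (x + k + 1) = (s : ℤ) ^ x * (s : ℤ) ^ (k + 1) := by rw [← pow_add]; ring_nf
  have e2 : (t : ℤ) ^ (y + l + 1) = (t : ℤ) ^ y * (t : ℤ) ^ (l + 1) := by rw [← pow_add]; ring_nf
  rw [e1, e2] at h'
  have hdiff : (s : ℤ) ^ x * ((s : ℤ) ^ (k + 1) - 1) + σ * ((t : ℤ) ^ y * ((t : ℤ) ^ (l + 1) - 1)) = 0 := by
    linear_combination h - h'
  have p1 : 0 < (s : ℤ) ^ x * ((s : ℤ) ^ (k + 1) - 1) := mul_pos hs0 (by linarith)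
  have p2 : 0 < (t : ℤ) ^ y * ((t : ℤ) ^ (l + 1) - 1) := mul_pos ht0 (by linarith)
  rcases hσ with rfl | rfl
  · linarith
  · have hMm : (0 : ℤ) < (M : ℤ) ^ m := by positivity
    have hgt : (t : ℤ) ^ y < (s : ℤ) ^ x := by linarith
    have hgt' : (t : ℤ) ^ (l + 1) < (s : ℤ) ^ (k + 1) := by
      refine lt_of_pow_lt_pow_left₀ y (by positivity) ?_
      rw [← pow_mul (s : ℤ), hkl, mul_comm (l + 1) x, pow_mul, ← pow_mul, mul_comm (l + 1), pow_mul]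
      exact pow_lt_pow_left₀ hgt (by positivity) (by omega)
    have : (t : ℤ) ^ y * ((t : ℤ) ^ (l + 1) - 1) < (s : ℤ) ^ x * ((s : ℤ) ^ (k + 1) - 1) :=
      mul_lt_mul'' hgt (by linarith) ht0.le (by linarith)
    linarith

/-- The gap principle: three solutions in which the exponent of `M` is not constant force an
exponent of size about `√M`. -/
lemma gap_principle (M s t : ℕ) (σ : ℤ) (hσ : σ = 1 ∨ σ = -1) (hM : 2 ≤ M) (hs : 2 ≤ s)
    (ht : 2 ≤ t) (hsM : Nat.Coprime s M) (htM : Nat.Coprime t M)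
    (m₁ x₁ y₁ m₂ x₂ y₂ m₃ x₃ y₃ n : ℕ) (hm : 0 < m₁)
    (hx₂ : 0 < x₂) (hy₂ : 0 < y₂) (hx₃ : 0 < x₃) (hy₃ : 0 < y₃)
    (h₁ : (M : ℤ) ^ m₁ = (s : ℤ) ^ x₁ + σ * (t : ℤ) ^ y₁)
    (h₂ : (M : ℤ) ^ m₂ = (s : ℤ) ^ x₂ + σ * (t : ℤ) ^ y₂)
    (h₃ : (M : ℤ) ^ m₃ = (s : ℤ) ^ x₃ + σ * (t : ℤ) ^ y₃)
    (h12 : m₁ < m₂) (h23 : m₂ ≤ m₃) (hne : ¬ (x₂ = x₃ ∧ y₂ = y₃))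
    (hx₂n : x₂ ≤ n) (hy₂n : y₂ ≤ n) (hx₃n : x₃ ≤ n) (hy₃n : y₃ ≤ n) : M ≤ 2 * n ^ 2 := by
  have hxn : x₂ * y₃ ≤ n * n := Nat.mul_le_mul hx₂n hy₃n
  have hyn : x₃ * y₂ ≤ n * n := Nat.mul_le_mul hx₃n hy₂n
  rcases lt_trichotomy (x₂ * y₃) (x₃ * y₂) with hlt | heq | hgt
  · obtain ⟨D, hD⟩ := Nat.exists_eq_add_of_lt hlt
    have := Nat.le_of_dvd (by omega) (gap_of_lt M s t σ hσ hM hsM htM m₁ x₁ y₁ m₃ x₃ y₃ m₂ x₂ y₂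
      (D + 1) hm h₁ h₃ h₂ (by omega) h12 hD)
    nlinarith
  · rcases h23.lt_or_eq with h | rfl
    · have := Nat.le_of_dvd (by omega) (gap_of_proportional M s t σ hσ hM htM m₂ x₂ y₂ m₃ x₃ y₃
        (by omega) h₂ h₃ h heq)
      nlinarith
    · have e1 := not_proportional M s t σ hσ hs ht (by omega) m₂ x₂ y₂ x₃ y₃ hy₂ h₂ h₃ heq
      have e2 := not_proportional M s t σ hσ hs ht (by omega) m₂ x₃ y₃ x₂ y₂ hy₃ h₃ h₂ heq.symm
      have e3 : x₂ = x₃ := by omega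
      subst e3
      exact absurd ⟨rfl, (Nat.eq_of_mul_eq_mul_left hx₂ heq).symm⟩ hne
  · obtain ⟨D, hD⟩ := Nat.exists_eq_add_of_lt hgt
    have := Nat.le_of_dvd (by omega) (gap_of_lt M s t σ hσ hM hsM htM m₁ x₁ y₁ m₂ x₂ y₂ m₃ x₃ y₃
      (D + 1) hm h₁ h₂ h₃ h12 (by omega) hD)
    nlinarith

end ExpSum

/-! ### Solutions with a common power -/

namespace ExpSum
open Finset

/-- If `b ^ y` exactly divides `c ^ k - 1` and `b ^ y'` divides `c ^ j - 1`, then `b ^ (y' - y)`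
divides `2 * j`, provided that `4 ∣ b ^ y` in case `b` is even. -/
lemma pow_sub_dvd_two_mul (b c k j y y' : ℕ) (r : ℤ) (h4 : 2 ∣ b → 4 ∣ b ^ y) (hb0 : 0 < b)
    (hy : 0 < y) (hyy : y ≤ y') (hk : (c : ℤ) ^ k - 1 = (b : ℤ) ^ y * r)
    (hr : IsCoprime (b : ℤ) r) (hj : (b : ℤ) ^ y' ∣ (c : ℤ) ^ j - 1) : b ^ (y' - y) ∣ 2 * j := by
  have hdvd : ((b ^ y' : ℕ) : ℤ) ∣ (((c : ℤ) ^ k) ^ 2) ^ j - (((1 : ℤ)) ^ 2) ^ j := by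
    push_cast
    simp only [one_pow]
    have e : (((c : ℤ) ^ k) ^ 2) ^ j = ((c : ℤ) ^ j) ^ (k * 2) := by
      rw [← pow_mul, ← pow_mul, ← pow_mul]; ring_nf
    rw [e]
    exact hj.trans (sub_one_dvd_pow_sub_one _ _)
  have key := (dvd_sq_pow_sub_iff (b ^ y') ((c : ℤ) ^ k - 1) ((c : ℤ) ^ k) 1 rfl
    (fun p hp hpd => ⟨?_, ?_⟩) (fun h => ?_) j).mp hdvd
  · rw [hk] at key
    have h3 : (b : ℤ) ^ y * (b : ℤ) ^ (y' - y) ∣ (b : ℤ) ^ y * (2 * j * r) := by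
      rw [← pow_add, Nat.add_sub_cancel' hyy]
      push_cast at key
      convert key using 1; ring
    have h4 := Int.dvd_of_mul_dvd_mul_left (by positivity) h3
    have h5 : IsCoprime ((b : ℤ) ^ (y' - y)) r := hr.pow_left
    exact_mod_cast h5.dvd_of_dvd_mul_right h4
  · have hpb : (p : ℤ) ∣ (b : ℤ) := by exact_mod_cast hp.dvd_of_dvd_pow hpd
    rw [hk]
    exact (hpb.trans (dvd_pow_self _ hy.ne')).mul_right _
  · intro h
    exact hp.one_lt.ne' (by exact_mod_cast Int.eq_one_of_dvd_one (by positivity) h)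
  · rw [hk]
    have h5 : (4 : ℤ) ∣ (b : ℤ) ^ y := by exact_mod_cast h4 (Nat.prime_two.dvd_of_dvd_pow h)
    exact h5.mul_right _

lemma pow_sub_dvd_of_odd (b c k j y y' : ℕ) (r : ℤ) (hb : ¬ 2 ∣ b) (hb0 : 0 < b) (hy : 0 < y)
    (hyy : y ≤ y') (hk : (c : ℤ) ^ k - 1 = (b : ℤ) ^ y * r) (hr : IsCoprime (b : ℤ) r)
    (hj : (b : ℤ) ^ y' ∣ (c : ℤ) ^ j - 1) : b ^ (y' - y) ∣ j := by
  have h7 : Nat.Coprime (b ^ (y' - y)) 2 :=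
    Nat.Coprime.pow_left _ ((Nat.Prime.coprime_iff_not_dvd Nat.prime_two).mpr hb).symm
  exact h7.dvd_of_dvd_mul_left
    (pow_sub_dvd_two_mul b c k j y y' r (fun h => absurd h hb) hb0 hy hyy hk hr hj)

/-- A bound replacing `pow_sub_dvd_two_mul` without any condition at the prime `2`. -/
lemma pow_sub_le (b c k j y y' : ℕ) (r : ℤ) (hb0 : 0 < b) (hc : 2 ≤ c) (hj0 : 0 < j) (hy : 0 < y)
    (hyy : y < y') (hk : (c : ℤ) ^ k - 1 = (b : ℤ) ^ y * r) (hr : IsCoprime (b : ℤ) r)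
    (hj : (b : ℤ) ^ y' ∣ (c : ℤ) ^ j - 1) : b ^ (y' - y) ≤ (c + 1) * j := by
  by_cases h4 : 2 ∣ b → 4 ∣ b ^ y
  · have h7 := Nat.le_of_dvd (by omega) (pow_sub_dvd_two_mul b c k j y y' r h4 hb0 hy hyy.le hk hr hj)
    exact h7.trans (Nat.mul_le_mul_right _ (by omega))
  · -- here `b = 2 * b'` with `b'` odd and `y = 1`; the prime `2` is treated through `c + 1`
    push Not at h4
    obtain ⟨⟨b', rfl⟩, h4⟩ := h4
    have hb' : ¬ 2 ∣ b' := by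
      rintro ⟨l, rfl⟩
      exact h4 (Dvd.dvd.trans ⟨l, by ring⟩ (dvd_pow_self (2 * (2 * l)) hy.ne'))
    have hy1 : y = 1 := by
      by_contra hne
      exact h4 (Dvd.dvd.trans ⟨b' ^ 2, by ring⟩ (pow_dvd_pow (2 * b') (show 2 ≤ y by omega)))
    subst hy1
    push_cast at hk hr hj
    have h1 : b' ^ (y' - 1) ∣ j := by
      refine pow_sub_dvd_of_odd b' c k j 1 y' (2 * r) hb' (by omega) one_pos hyy.le
        (by rw [hk]; ring) ?_ ?_
      · refine IsCoprime.mul_right ?_ hr.of_mul_left_right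
        exact_mod_cast Nat.isCoprime_iff_coprime.mpr
          ((Nat.Prime.coprime_iff_not_dvd Nat.prime_two).mpr hb').symm
      · exact (pow_dvd_pow_of_dvd (Dvd.intro_left 2 rfl) y').trans hj
    have h2 : 2 ^ (y' - 1) ∣ (c + 1) * j := by
      have h2j : (2 : ℤ) ^ y' ∣ (c : ℤ) ^ j - 1 :=
        (pow_dvd_pow_of_dvd (Dvd.intro _ rfl) y').trans hj
      have hodd : ¬ (2 : ℤ) ∣ (c : ℤ) := by
        intro h
        have h3 := (dvd_pow_self (2 : ℤ) (by omega : y' ≠ 0)).trans h2j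
        have h4 := (dvd_sub_right (h.trans (dvd_pow_self _ hj0.ne'))).mp h3
        norm_num at h4
      have h4c : (4 : ℤ) ∣ (c : ℤ) + 1 := by
        -- otherwise `4 ∣ c - 1 ∣ c ^ k - 1 = 2 * b' * r`, an odd multiple of `2`
        by_contra hn
        have h5 : (4 : ℤ) ∣ (c : ℤ) - 1 := by omega
        have h6 := h5.trans (sub_one_dvd_pow_sub_one (c : ℤ) k)
        rw [hk] at h6
        have hrr : ¬ (2 : ℤ) ∣ r := by
          intro h
          have := hr.isUnit_of_dvd' (Dvd.intro _ rfl) h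
          exact absurd this (by decide)
        have h7 : (2 : ℤ) ∣ b' * r := by
          obtain ⟨l, hl⟩ := h6
          exact ⟨l, by linarith⟩
        rcases Int.prime_two.dvd_or_dvd h7 with h | h
        · exact hb' (by exact_mod_cast h)
        · exact hrr h
      have hdvd : ((2 ^ y' : ℕ) : ℤ) ∣ ((c : ℤ) ^ 2) ^ j - ((-1 : ℤ) ^ 2) ^ j := by
        push_cast
        have e : ((c : ℤ) ^ 2) ^ j = ((c : ℤ) ^ j) ^ 2 := pow_right_comm _ _ _
        rw [e, one_pow]
        exact h2j.trans (sub_one_dvd_pow_sub_one _ _)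
      have key := (dvd_sq_pow_sub_iff (2 ^ y') ((c : ℤ) + 1) (c : ℤ) (-1) (by ring)
        (fun p hp hpd => ?_) (fun _ => h4c) j).mp hdvd
      · have h8 : (2 : ℕ) * 2 ^ (y' - 1) ∣ 2 * ((c + 1) * j) := by
          rw [← pow_succ', Nat.sub_add_cancel (by omega)]
          have : 2 ^ y' ∣ 2 * j * (c + 1) := by exact_mod_cast key
          convert this using 1; ring
        exact Nat.dvd_of_mul_dvd_mul_left two_pos h8
      · have hp2 : p = 2 := (Nat.prime_dvd_prime_iff_eq hp Nat.prime_two).mp (hp.dvd_of_dvd_pow hpd)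
        subst hp2
        refine ⟨(by norm_num : ((2 : ℕ) : ℤ) ∣ 4).trans h4c, by decide⟩
    have h3 : Nat.Coprime (2 ^ (y' - 1)) (b' ^ (y' - 1)) :=
      Nat.Coprime.pow _ _ ((Nat.Prime.coprime_iff_not_dvd Nat.prime_two).mpr hb')
    rw [mul_pow]
    exact Nat.le_of_dvd (by positivity) (h3.mul_dvd_of_dvd_of_dvd h2 (h1.mul_left _))

/-- Three representations `c ^ z - b ^ y` of one number `N ≥ c` force an exponent of size about `√N`. -/
lemma equal_difference (b c N z₁ z₂ z₃ y₁ y₂ y₃ n : ℕ) (hb : 2 ≤ b) (hc : 2 ≤ c)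
    (hbc : Nat.Coprime b c) (hz : 0 < z₁) (hy : 0 < y₁) (h12 : z₁ < z₂) (h23 : z₂ < z₃)
    (h₁ : N + b ^ y₁ = c ^ z₁) (h₂ : N + b ^ y₂ = c ^ z₂) (h₃ : N + b ^ y₃ = c ^ z₃)
    (hcN : c ≤ N) (hn : z₃ ≤ n) : 4 * N ≤ 9 * n ^ 2 := by
  have hy12 : y₁ < y₂ := by
    have := Nat.pow_lt_pow_right (show 1 < c by omega) h12
    exact (Nat.pow_lt_pow_iff_right (show 1 < b by omega)).mp (by omega)
  have hy23 : y₂ < y₃ := by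
    have := Nat.pow_lt_pow_right (show 1 < c by omega) h23
    exact (Nat.pow_lt_pow_iff_right (show 1 < b by omega)).mp (by omega)
  have hbcZ : IsCoprime (b : ℤ) (c : ℤ) := Nat.isCoprime_iff_coprime.mpr hbc
  have fac : ∀ z z' y y' : ℕ, z < z' → y < y' → N + b ^ y = c ^ z → N + b ^ y' = c ^ z' →
      (c : ℤ) ^ z * ((c : ℤ) ^ (z' - z) - 1) = (b : ℤ) ^ y * ((b : ℤ) ^ (y' - y) - 1) := by
    intro z z' y y' hzz hyy e e'
    have e1 : (N : ℤ) + (b : ℤ) ^ y = (c : ℤ) ^ z := by exact_mod_cast e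
    have e2 : (N : ℤ) + (b : ℤ) ^ y' = (c : ℤ) ^ z' := by exact_mod_cast e'
    rw [mul_sub, mul_sub, ← pow_add, ← pow_add, Nat.add_sub_cancel' hzz.le,
      Nat.add_sub_cancel' hyy.le]
    linear_combination e1 - e2
  have f1 := fac z₁ z₂ y₁ y₂ h12 hy12 h₁ h₂
  have f2 := fac z₂ z₃ y₂ y₃ h23 hy23 h₂ h₃
  -- `c ^ z₁` divides `b ^ (y₂ - y₁) - 1`
  obtain ⟨r, hr⟩ : (c : ℤ) ^ z₁ ∣ (b : ℤ) ^ (y₂ - y₁) - 1 :=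
    (hbcZ.symm.pow).dvd_of_dvd_mul_left (Dvd.intro _ f1)
  have hc0 : (0 : ℤ) < (c : ℤ) ^ z₁ := by positivity
  have hb1 : (1 : ℤ) < (b : ℤ) ^ (y₂ - y₁) := one_lt_pow₀ (by exact_mod_cast hb) (by omega)
  have hlt : c ^ z₁ < b ^ (y₂ - y₁) := by
    have := Int.le_of_dvd (by linarith) (Dvd.intro _ hr.symm)
    have h2 : (c : ℤ) ^ z₁ < (b : ℤ) ^ (y₂ - y₁) := by linarith
    exact_mod_cast h2
  have hk : (c : ℤ) ^ (z₂ - z₁) - 1 = (b : ℤ) ^ y₁ * r := by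
    apply mul_left_cancel₀ hc0.ne'
    rw [f1, hr]; ring
  have hrb : IsCoprime (b : ℤ) r := by
    have h1 : IsCoprime (b : ℤ) ((c : ℤ) ^ z₁ * r) := by
      rw [← hr]
      have h2 : IsCoprime ((b : ℤ) ^ (y₂ - y₁)) ((b : ℤ) ^ (y₂ - y₁) - 1) :=
        ⟨1, -1, by ring⟩
      exact (IsCoprime.pow_left_iff (by omega)).mp h2
    exact h1.of_mul_right_right
  have hj : (b : ℤ) ^ y₂ ∣ (c : ℤ) ^ (z₃ - z₂) - 1 :=
    (hbcZ.pow).dvd_of_dvd_mul_left (Dvd.intro _ f2.symm)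
  have hle := pow_sub_le b c (z₂ - z₁) (z₃ - z₂) y₁ y₂ r (by omega) hc (by omega) hy hy12 hk hrb hj
  have hNc : N < c ^ z₁ := by have : 0 < b ^ y₁ := by positivity
                              omega
  have hz2 : 2 ≤ z₁ := by
    by_contra h
    have : z₁ = 1 := by omega
    subst this
    rw [pow_one] at hNc
    omega
  obtain ⟨w, rfl⟩ := Nat.exists_eq_add_of_le hz2
  have e1 : c ^ (2 + w) = c * c ^ (1 + w) := by rw [← pow_succ']; ring_nf
  have hw : c ≤ c ^ (1 + w) := Nat.le_self_pow (by omega) c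
  have hj3 : z₃ - z₂ ≤ n := by omega
  have h5 : c * c ^ (1 + w) < (c + 1) * n := by
    rw [← e1]
    calc c ^ (2 + w) < (c + 1) * (z₃ - z₂) := by omega
      _ ≤ _ := Nat.mul_le_mul_left _ hj3
  have h6 : 2 * c ^ (1 + w) < 3 * n := by
    have : c * (2 * c ^ (1 + w)) < c * (3 * n) := by nlinarith
    exact lt_of_mul_lt_mul_left this (by omega)
  have h7 : N < c ^ (1 + w) * c ^ (1 + w) := by
    rw [e1] at hNc
    exact hNc.trans_le (Nat.mul_le_mul_right _ hw)
  nlinarith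

/-- The case of odd `b` of `equal_sum`. -/
lemma equal_sum_odd (a b N x₁ x₂ x₃ y₁ y₂ y₃ : ℕ) (ha : 2 ≤ a) (hb : 2 ≤ b)
    (hodd : ¬ 2 ∣ b) (hab : Nat.Coprime a b) (hy : 0 < y₃) (h12 : x₁ < x₂) (h23 : x₂ < x₃)
    (h₁ : a ^ x₁ + b ^ y₁ = N) (h₂ : a ^ x₂ + b ^ y₂ = N) (h₃ : a ^ x₃ + b ^ y₃ = N) : False := by
  have hy12 : y₂ < y₁ := by
    have := Nat.pow_lt_pow_right (show 1 < a by omega) h12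
    exact (Nat.pow_lt_pow_iff_right (show 1 < b by omega)).mp (by omega)
  have hy23 : y₃ < y₂ := by
    have := Nat.pow_lt_pow_right (show 1 < a by omega) h23
    exact (Nat.pow_lt_pow_iff_right (show 1 < b by omega)).mp (by omega)
  have habZ : IsCoprime (b : ℤ) (a : ℤ) := Nat.isCoprime_iff_coprime.mpr hab.symm
  have fac : ∀ x x' y y' : ℕ, x < x' → y' < y → a ^ x + b ^ y = N → a ^ x' + b ^ y' = N →
      (a : ℤ) ^ x * ((a : ℤ) ^ (x' - x) - 1) = (b : ℤ) ^ y' * ((b : ℤ) ^ (y - y') - 1) := by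
    intro x x' y y' hxx hyy e e'
    have e1 : (a : ℤ) ^ x + (b : ℤ) ^ y = N := by exact_mod_cast e
    have e2 : (a : ℤ) ^ x' + (b : ℤ) ^ y' = N := by exact_mod_cast e'
    rw [mul_sub, mul_sub, ← pow_add, ← pow_add, Nat.add_sub_cancel' hxx.le,
      Nat.add_sub_cancel' hyy.le]
    linear_combination e2 - e1
  have f1 := fac x₁ x₂ y₁ y₂ h12 hy12 h₁ h₂
  have f2 := fac x₂ x₃ y₂ y₃ h23 hy23 h₂ h₃
  obtain ⟨r, hr⟩ : (a : ℤ) ^ x₂ ∣ (b : ℤ) ^ (y₂ - y₃) - 1 :=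
    (habZ.symm.pow).dvd_of_dvd_mul_left (Dvd.intro _ f2)
  have ha0 : (0 : ℤ) < (a : ℤ) ^ x₂ := by positivity
  have hb1 : (1 : ℤ) < (b : ℤ) ^ (y₂ - y₃) := one_lt_pow₀ (by exact_mod_cast hb) (by omega)
  have hlt : a ^ x₂ < b ^ (y₂ - y₃) := by
    have := Int.le_of_dvd (by linarith) (Dvd.intro _ hr.symm)
    have h2 : (a : ℤ) ^ x₂ < (b : ℤ) ^ (y₂ - y₃) := by linarith
    exact_mod_cast h2
  have hk : (a : ℤ) ^ (x₃ - x₂) - 1 = (b : ℤ) ^ y₃ * r := by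
    apply mul_left_cancel₀ ha0.ne'
    rw [f2, hr]; ring
  have hrb : IsCoprime (b : ℤ) r := by
    have h1 : IsCoprime (b : ℤ) ((a : ℤ) ^ x₂ * r) := by
      rw [← hr]
      have h2 : IsCoprime ((b : ℤ) ^ (y₂ - y₃)) ((b : ℤ) ^ (y₂ - y₃) - 1) :=
        ⟨1, -1, by ring⟩
      exact (IsCoprime.pow_left_iff (by omega)).mp h2
    exact h1.of_mul_right_right
  have hj : (b : ℤ) ^ y₂ ∣ (a : ℤ) ^ (x₂ - x₁) - 1 :=
    (habZ.pow).dvd_of_dvd_mul_left (Dvd.intro _ f1.symm)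
  have h5 := Nat.le_of_dvd (by omega) (pow_sub_dvd_of_odd b a (x₃ - x₂) (x₂ - x₁) y₃ y₂ r hodd
    (by omega) hy hy23.le hk hrb hj)
  have h6 : x₂ < a ^ x₂ := Nat.lt_pow_self (by omega)
  omega

/-- There are no three representations `a ^ x + b ^ y` of one number. -/
lemma equal_sum (a b N x₁ x₂ x₃ y₁ y₂ y₃ : ℕ) (ha : 2 ≤ a) (hb : 2 ≤ b)
    (hab : Nat.Coprime a b) (hx : 0 < x₁) (hy : 0 < y₃) (h12 : x₁ < x₂) (h23 : x₂ < x₃)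
    (h₁ : a ^ x₁ + b ^ y₁ = N) (h₂ : a ^ x₂ + b ^ y₂ = N) (h₃ : a ^ x₃ + b ^ y₃ = N) : False := by
  by_cases hodd : 2 ∣ b
  · have hy12 : y₂ < y₁ := by
      have := Nat.pow_lt_pow_right (show 1 < a by omega) h12
      exact (Nat.pow_lt_pow_iff_right (show 1 < b by omega)).mp (by omega)
    have hy23 : y₃ < y₂ := by
      have := Nat.pow_lt_pow_right (show 1 < a by omega) h23
      exact (Nat.pow_lt_pow_iff_right (show 1 < b by omega)).mp (by omega)
    have hodd' : ¬ 2 ∣ a := fun h =>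
      Nat.not_coprime_of_dvd_of_dvd (by norm_num : 1 < 2) h hodd hab
    exact equal_sum_odd b a N y₃ y₂ y₁ x₃ x₂ x₁ hb ha hodd' hab.symm hx hy23 hy12
      (by omega) (by omega) (by omega)
  · exact equal_sum_odd a b N x₁ x₂ x₃ y₁ y₂ y₃ ha hb hodd hab hy h12 h23 h₁ h₂ h₃

end ExpSum

/-! ### Four solutions -/

namespace ExpSum
open Finset

lemma exists_sorted_pair {ι : Type*} [DecidableEq ι] (F : Finset ι) (m : ι → ℕ) (hF : 3 ≤ #F) :
    ∃ p ∈ F, ∃ q ∈ F, ∃ r ∈ F, p ≠ q ∧ q ≠ r ∧ p ≠ r ∧ m p ≤ m q ∧ m q ≤ m r ∧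
      ∀ w ∈ F, w ≠ p → w ≠ q → m q ≤ m w := by
  obtain ⟨p, hp, hpm⟩ := exists_min_image F m (card_pos.mp (by omega))
  have h1 : #(F.erase p) = #F - 1 := card_erase_of_mem hp
  obtain ⟨q, hq, hqm⟩ := exists_min_image (F.erase p) m (card_pos.mp (by omega))
  have h2 : #((F.erase p).erase q) = #(F.erase p) - 1 := card_erase_of_mem hq
  obtain ⟨r, hr⟩ := card_pos.mp (show 0 < #((F.erase p).erase q) by omega)
  rw [mem_erase, mem_erase] at hr
  rw [mem_erase] at hq
  exact ⟨p, hp, q, hq.2, r, hr.2.2, hq.1.symm, hr.1.symm, hr.2.1.symm, hpm q hq.2,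
    hqm r (mem_erase.mpr hr.2), fun w hw hwp _ => hqm w (mem_erase.mpr ⟨hwp, hw⟩)⟩

/-- Among four objects weighted by `m` there are three of which the lightest is strictly lighter than
the other two, or three of equal weight. -/
lemma exists_triple {ι : Type*} [DecidableEq ι] (F : Finset ι) (m : ι → ℕ) (hF : 4 ≤ #F) :
    ∃ p ∈ F, ∃ q ∈ F, ∃ r ∈ F, p ≠ q ∧ q ≠ r ∧ p ≠ r ∧
      ((m p < m q ∧ m q ≤ m r) ∨ (m p = m q ∧ m q = m r)) := by
  obtain ⟨p, hp, hpm⟩ := exists_min_image F m (card_pos.mp (by omega))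
  have h1 : #(F.erase p) = #F - 1 := card_erase_of_mem hp
  obtain ⟨q, hq, r, hr, w, hw, hqr, hrw, hqw, h2, h3, -⟩ :=
    exists_sorted_pair (F.erase p) m (by omega)
  rw [mem_erase] at hq hr hw
  have h4 := hpm q hq.2
  rcases h4.lt_or_eq with h | h
  · exact ⟨p, hp, q, hq.2, r, hr.2, hq.1.symm, hqr, hr.1.symm, Or.inl ⟨h, h2⟩⟩
  · rcases h2.lt_or_eq with h' | h'
    · exact ⟨q, hq.2, r, hr.2, w, hw.2, hqr, hrw, hqw, Or.inl ⟨h', h3⟩⟩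
    · exact ⟨p, hp, q, hq.2, r, hr.2, hq.1.symm, hqr, hr.1.symm, Or.inr ⟨h, h'⟩⟩

lemma exists_strictly_sorted {ι : Type*} [DecidableEq ι] (p q r : ι) (f : ι → ℕ)
    (hpq : f p ≠ f q) (hqr : f q ≠ f r) (hpr : f p ≠ f r) (Q : ι → Prop) (hp : Q p) (hq : Q q)
    (hr : Q r) : ∃ u v w, Q u ∧ Q v ∧ Q w ∧ f u < f v ∧ f v < f w := by
  rcases lt_or_gt_of_ne hpq with h1 | h1 <;> rcases lt_or_gt_of_ne hqr with h2 | h2 <;>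
    rcases lt_or_gt_of_ne hpr with h3 | h3
  · exact ⟨p, q, r, hp, hq, hr, h1, h2⟩
  · omega
  · exact ⟨p, r, q, hp, hr, hq, h3, h2⟩
  · exact ⟨r, p, q, hr, hp, hq, h3, h1⟩
  · exact ⟨q, p, r, hq, hp, hr, h1, h3⟩
  · exact ⟨q, r, p, hq, hr, hp, h2, h3⟩
  · omega
  · exact ⟨r, q, p, hr, hq, hp, h2, h1⟩

/-- Four solutions bound `c` by the square of the largest exponent. -/
lemma bound_right {ι : Type*} [DecidableEq ι] (a b c n : ℕ) (ha : 2 ≤ a) (hb : 2 ≤ b) (hc : 2 ≤ c)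
    (hab : Nat.Coprime a b) (hac : Nat.Coprime a c) (hbc : Nat.Coprime b c)
    (F : Finset ι) (hF : 4 ≤ #F) (x y z : ι → ℕ)
    (hx : ∀ p ∈ F, 0 < x p) (hy : ∀ p ∈ F, 0 < y p) (hz : ∀ p ∈ F, 0 < z p)
    (heq : ∀ p ∈ F, a ^ x p + b ^ y p = c ^ z p)
    (hinj : ∀ p ∈ F, ∀ q ∈ F, x p = x q → y p = y q → z p = z q → p = q)
    (hxn : ∀ p ∈ F, x p ≤ n) (hyn : ∀ p ∈ F, y p ≤ n) : 4 * c ≤ 9 * n ^ 2 := by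
  have hZ : ∀ p ∈ F, (c : ℤ) ^ z p = (a : ℤ) ^ x p + 1 * (b : ℤ) ^ y p := fun p hp => by
    rw [one_mul]; exact_mod_cast (heq p hp).symm
  obtain ⟨p, hp, q, hq, r, hr, hpq, hqr, hpr, h | h⟩ := exists_triple F z hF
  · have := gap_principle c a b 1 (Or.inl rfl) hc ha hb hac hbc (z p) (x p) (y p) (z q) (x q) (y q)
      (z r) (x r) (y r) n (hz p hp) (hx q hq) (hy q hq) (hx r hr) (hy r hr)
      (hZ p hp) (hZ q hq) (hZ r hr) h.1 h.2 ?_ (hxn q hq) (hyn q hq) (hxn r hr) (hyn r hr)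
    · omega
    · rintro ⟨e1, e2⟩
      refine hqr (hinj q hq r hr e1 e2 ?_)
      have e3 := heq q hq
      rw [e1, e2, heq r hr] at e3
      exact Nat.pow_right_injective hc e3.symm
  · have hne : ∀ u ∈ F, ∀ v ∈ F, u ≠ v → z u = z v → x u ≠ x v := by
      intro u hu v hv huv hzz hxx
      refine huv (hinj u hu v hv hxx ?_ hzz)
      have e1 := heq u hu
      have e2 := heq v hv
      rw [hxx, hzz] at e1
      exact Nat.pow_right_injective hb (by simp only; omega)
    obtain ⟨u, v, w, ⟨hu, hu'⟩, ⟨hv, hv'⟩, ⟨hw, hw'⟩, h1, h2⟩ :=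
      exists_strictly_sorted p q r x (hne p hp q hq hpq h.1) (hne q hq r hr hqr h.2)
        (hne p hp r hr hpr (h.1.trans h.2)) (fun i => i ∈ F ∧ z i = z p) ⟨hp, rfl⟩ ⟨hq, h.1.symm⟩
        ⟨hr, (h.1.trans h.2).symm⟩
    have e : ∀ i ∈ F, z i = z p → a ^ x i + b ^ y i = c ^ z p := fun i hi hzi => by
      rw [heq i hi, hzi]
    exact (equal_sum a b (c ^ z p) (x u) (x v) (x w) (y u) (y v) (y w) ha hb hab (hx u hu)
      (hy w hw) h1 h2 (e u hu hu') (e v hv hv') (e w hw hw')).elim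

/-- Four solutions bound `a` by the square of the largest exponent, if `c ≤ a`. -/
lemma bound_left {ι : Type*} [DecidableEq ι] (a b c n : ℕ) (ha : 2 ≤ a) (hb : 2 ≤ b) (hc : 2 ≤ c)
    (hab : Nat.Coprime a b) (hac : Nat.Coprime a c) (hbc : Nat.Coprime b c) (hca : c ≤ a)
    (F : Finset ι) (hF : 4 ≤ #F) (x y z : ι → ℕ)
    (hx : ∀ p ∈ F, 0 < x p) (hy : ∀ p ∈ F, 0 < y p) (hz : ∀ p ∈ F, 0 < z p)
    (heq : ∀ p ∈ F, a ^ x p + b ^ y p = c ^ z p)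
    (hinj : ∀ p ∈ F, ∀ q ∈ F, x p = x q → y p = y q → z p = z q → p = q)
    (hyn : ∀ p ∈ F, y p ≤ n) (hzn : ∀ p ∈ F, z p ≤ n) : 4 * a ≤ 9 * n ^ 2 := by
  have hZ : ∀ p ∈ F, (a : ℤ) ^ x p = (c : ℤ) ^ z p + (-1) * (b : ℤ) ^ y p := fun p hp => by
    have : (a : ℤ) ^ x p + (b : ℤ) ^ y p = (c : ℤ) ^ z p := by exact_mod_cast heq p hp
    linarith
  obtain ⟨p, hp, q, hq, r, hr, hpq, hqr, hpr, h | h⟩ := exists_triple F x hF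
  · have := gap_principle a c b (-1) (Or.inr rfl) ha hc hb hac.symm hab.symm (x p) (z p) (y p)
      (x q) (z q) (y q) (x r) (z r) (y r) n (hx p hp) (hz q hq) (hy q hq) (hz r hr) (hy r hr)
      (hZ p hp) (hZ q hq) (hZ r hr) h.1 h.2 ?_ (hzn q hq) (hyn q hq) (hzn r hr) (hyn r hr)
    · omega
    · rintro ⟨e1, e2⟩
      refine hqr (hinj q hq r hr ?_ e2 e1)
      have e3 := heq q hq
      have e4 := heq r hr
      rw [e1, e2] at e3
      exact Nat.pow_right_injective ha (by simp only; omega)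
  · have hne : ∀ u ∈ F, ∀ v ∈ F, u ≠ v → x u = x v → z u ≠ z v := by
      intro u hu v hv huv hxx hzz
      refine huv (hinj u hu v hv hxx ?_ hzz)
      have e1 := heq u hu
      have e2 := heq v hv
      rw [hxx, hzz] at e1
      exact Nat.pow_right_injective hb (by simp only; omega)
    obtain ⟨u, v, w, ⟨hu, hu'⟩, ⟨hv, hv'⟩, ⟨hw, hw'⟩, h1, h2⟩ :=
      exists_strictly_sorted p q r z (hne p hp q hq hpq h.1) (hne q hq r hr hqr h.2)
        (hne p hp r hr hpr (h.1.trans h.2)) (fun i => i ∈ F ∧ x i = x p) ⟨hp, rfl⟩ ⟨hq, h.1.symm⟩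
        ⟨hr, (h.1.trans h.2).symm⟩
    have e : ∀ i ∈ F, x i = x p → a ^ x p + b ^ y i = c ^ z i := fun i hi hxi => by
      rw [← heq i hi, hxi]
    have hap : a ≤ a ^ x p := Nat.le_self_pow (hx p hp).ne' a
    have := equal_difference b c (a ^ x p) (z u) (z v) (z w) (y u) (y v) (y w) n hb hc hbc
      (hz u hu) (hy u hu) h1 h2 (e u hu hu') (e v hv hv') (e w hw hw') (hca.trans hap) (hzn w hw)
    omega

/-- Four solutions bound all three bases by the square of the largest exponent. -/
lemma bound_max {ι : Type*} [DecidableEq ι] (a b c n : ℕ) (ha : 2 ≤ a) (hb : 2 ≤ b) (hc : 2 ≤ c)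
    (hab : Nat.Coprime a b) (hac : Nat.Coprime a c) (hbc : Nat.Coprime b c)
    (F : Finset ι) (hF : 4 ≤ #F) (x y z : ι → ℕ)
    (hx : ∀ p ∈ F, 0 < x p) (hy : ∀ p ∈ F, 0 < y p) (hz : ∀ p ∈ F, 0 < z p)
    (heq : ∀ p ∈ F, a ^ x p + b ^ y p = c ^ z p)
    (hinj : ∀ p ∈ F, ∀ q ∈ F, x p = x q → y p = y q → z p = z q → p = q)
    (hxn : ∀ p ∈ F, x p ≤ n) (hyn : ∀ p ∈ F, y p ≤ n) (hzn : ∀ p ∈ F, z p ≤ n) :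
    4 * max a (max b c) ≤ 9 * n ^ 2 := by
  have h1 := bound_right a b c n ha hb hc hab hac hbc F hF x y z hx hy hz heq hinj hxn hyn
  rcases le_total a c with hac' | hac' <;> rcases le_total b c with hbc' | hbc'
  · omega
  · have := bound_left b a c n hb ha hc hab.symm hbc hac hbc' F hF y x z hy hx hz
      (fun p hp => by rw [← heq p hp, add_comm])
      (fun p hp q hq e1 e2 e3 => hinj p hp q hq e2 e1 e3) hxn hzn
    omega
  · have := bound_left a b c n ha hb hc hab hac hbc hac' F hF x y z hx hy hz heq hinj hyn hzn
    omega
  · have h2 := bound_left b a c n hb ha hc hab.symm hbc hac hbc' F hF y x z hy hx hz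
      (fun p hp => by rw [← heq p hp, add_comm])
      (fun p hp q hq e1 e2 e3 => hinj p hp q hq e2 e1 e3) hxn hzn
    have h3 := bound_left a b c n ha hb hc hab hac hbc hac' F hF x y z hx hy hz heq hinj hyn hzn
    omega

/-- The numerical comparison: bases of size at most `9/4 * (X * l ^ 2) ^ 2` and at least `5 * 10 ^ 27`
force `X` to be large, and the logarithms of the bases to be small in terms of `log X`. -/
lemma numerics (M : ℕ) (X : ℝ) (hX : 0 < X) (hM : 5 * 10 ^ 27 < M)
    (h : 4 * (M : ℝ) ≤ 9 * (X * Real.log M ^ 2) ^ 2) :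
    22 ≤ Real.log X ∧ Real.log M ≤ 3 * Real.log X := by
  have hMr : (2 : ℝ) ^ 92 ≤ M := by
    have : 2 ^ 92 ≤ M := by
      refine le_trans ?_ hM.le; norm_num
    exact_mod_cast this
  have hM0 : (0 : ℝ) < M := lt_of_lt_of_le (by positivity) hMr
  have hl2 := Real.log_two_gt_d9
  have hl2' := Real.log_two_lt_d9
  set l := Real.log M with hl
  have hl63 : 63.7 ≤ l := by
    have h1 := Real.log_le_log (by positivity) hMr
    rw [Real.log_pow] at h1
    push_cast at h1
    linarith
  have hl0 : 0 < l := by linarith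
  have h1 : (M : ℝ) ≤ 9 / 4 * (X ^ 2 * l ^ 4) := by linarith [show (X * l ^ 2) ^ 2 = X ^ 2 * l ^ 4 by ring]
  have h2 := Real.log_le_log hM0 h1
  rw [Real.log_mul (by norm_num) (by positivity), Real.log_mul (by positivity) (by positivity),
    Real.log_pow, Real.log_pow, ← hl] at h2
  have h3 := Real.log_le_sub_one_of_pos (show (0 : ℝ) < 9 / 4 by norm_num)
  have h4 := Real.log_le_sub_one_of_pos (show 0 < l / 64 by positivity)
  rw [Real.log_div hl0.ne' (by norm_num), show (64 : ℝ) = 2 ^ 6 by norm_num, Real.log_pow] at h4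
  push_cast at h2 h4
  norm_num at h4
  constructor <;> linarith

end ExpSum

theorem stmt_5 (a b c : ℕ) (ha : 0 < a) (hb : 0 < b) (hc : 0 < c)
    (hab : Nat.Coprime a b) (hac : Nat.Coprime a c) (hbc : Nat.Coprime b c)
    (hmin : 1 < min a (min b c)) (hmax : 5 * 10 ^ 27 < max a (max b c)) :
    {p : ℕ × ℕ × ℕ | 0 < p.1 ∧ 0 < p.2.1 ∧ 0 < p.2.2 ∧
      a ^ p.1 + b ^ p.2.1 = c ^ p.2.2}.encard ≤ 3 := by
  by_contra hcon
  push Not at hcon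
  have ha2 : 2 ≤ a := by omega
  have hb2 : 2 ≤ b := by omega
  have hc2 : 2 ≤ c := by omega
  obtain ⟨T, hTS, hT⟩ := Set.exists_subset_encard_eq (Order.add_one_le_of_lt hcon)
  have hTfin : T.Finite := Set.finite_of_encard_eq_coe (k := 4) (by rw [hT]; norm_num)
  obtain ⟨F, rfl⟩ := hTfin.exists_finset_coe
  have hF : 4 ≤ F.card := by
    rw [Set.encard_coe_eq_coe_finsetCard] at hT
    have : ((F.card : ℕ) : ℕ∞) = ((4 : ℕ) : ℕ∞) := by rw [hT]; norm_num
    exact (Nat.cast_inj.mp this).ge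
  have hsol : ∀ p ∈ F, 0 < p.1 ∧ 0 < p.2.1 ∧ 0 < p.2.2 ∧ a ^ p.1 + b ^ p.2.1 = c ^ p.2.2 :=
    fun p hp => hTS (by exact_mod_cast hp)
  have hlog2 := Real.log_two_gt_d9
  have log_pos : ∀ u : ℕ, 2 ≤ u → 0 < Real.log u := fun u hu =>
    Real.log_pos (by exact_mod_cast hu)
  have hla := log_pos a ha2
  have hlb := log_pos b hb2
  have hlc := log_pos c hc2
  -- the solution of largest height
  obtain ⟨p₀, hp₀, hmaxz⟩ := Finset.exists_max_image F (fun p => p.2.2) (Finset.card_pos.mp (by omega))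
  obtain ⟨hx₀, hy₀, hz₀, heq₀⟩ := hsol p₀ hp₀
  set M := max a (max b c) with hM
  set X : ℝ := p₀.2.2 / (Real.log a * Real.log b) with hXdef
  have hX : 0 < X := by positivity
  have hH : p₀.2.2 * Real.log c = X * Real.log a * Real.log b * Real.log c := by
    rw [hXdef]; field_simp
  have hle_log : ∀ u : ℕ, 2 ≤ u → u ≤ M → Real.log u ≤ Real.log M := fun u hu huM =>
    Real.log_le_log (by exact_mod_cast (by omega : 0 < u)) (by exact_mod_cast huM)
  have haM := hle_log a ha2 (by omega)
  have hbM := hle_log b hb2 (by omega)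
  have hcM := hle_log c hc2 (by omega)
  set l := Real.log M with hl
  have hl0 : 0 < l := hla.trans_le haM
  -- every exponent is at most `X * l ^ 2`
  have hzH : ∀ p ∈ F, p.2.2 * Real.log c ≤ X * Real.log a * Real.log b * Real.log c := by
    intro p hp
    rw [← hH]
    have : (p.2.2 : ℝ) ≤ p₀.2.2 := by exact_mod_cast hmaxz p hp
    gcongr
  have hpow : ∀ p ∈ F, (a : ℝ) ^ p.1 + (b : ℝ) ^ p.2.1 = (c : ℝ) ^ p.2.2 := fun p hp => by
    exact_mod_cast (hsol p hp).2.2.2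
  have ha0 : (0 : ℝ) < a := by exact_mod_cast ha
  have hb0 : (0 : ℝ) < b := by exact_mod_cast hb
  have hbound : ∀ (e : ℕ) (u v w : ℝ), 0 < u → 0 < v → 0 < w → v ≤ l → w ≤ l →
      e * u ≤ X * u * v * w → e ≤ ⌊X * l ^ 2⌋₊ := by
    intro e u v w hu hv hw hvl hwl he
    apply Nat.le_floor
    have h1 : (e : ℝ) * u ≤ (X * (v * w)) * u := by linarith
    have h2 := le_of_mul_le_mul_right h1 hu
    refine h2.trans ?_
    rw [sq]
    gcongr
  have hxn : ∀ p ∈ F, p.1 ≤ ⌊X * l ^ 2⌋₊ := fun p hp => by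
    refine hbound _ _ _ _ hla hlb hlc hbM hcM (le_trans ?_ (hzH p hp))
    rw [← Real.log_pow, ← Real.log_pow]
    have : 0 < (b : ℝ) ^ p.2.1 := by positivity
    exact Real.log_le_log (by positivity) (by linarith [hpow p hp])
  have hyn : ∀ p ∈ F, p.2.1 ≤ ⌊X * l ^ 2⌋₊ := fun p hp => by
    refine hbound _ (Real.log b) (Real.log a) (Real.log c) hlb hla hlc haM hcM
      (le_trans ?_ ((hzH p hp).trans_eq (by ring)))
    rw [← Real.log_pow, ← Real.log_pow]
    have : 0 < (a : ℝ) ^ p.1 := by positivity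
    exact Real.log_le_log (by positivity) (by linarith [hpow p hp])
  have hzn : ∀ p ∈ F, p.2.2 ≤ ⌊X * l ^ 2⌋₊ := fun p hp =>
    hbound _ (Real.log c) (Real.log a) (Real.log b) hlc hla hlb haM hbM
      ((hzH p hp).trans_eq (by ring))
  have hgap := ExpSum.bound_max a b c ⌊X * l ^ 2⌋₊ ha2 hb2 hc2 hab hac hbc F hF
    (fun p => p.1) (fun p => p.2.1) (fun p => p.2.2) (fun p hp => (hsol p hp).1)
    (fun p hp => (hsol p hp).2.1) (fun p hp => (hsol p hp).2.2.1)
    (fun p hp => (hsol p hp).2.2.2)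
    (fun p _ q _ h1 h2 h3 => Prod.ext h1 (Prod.ext h2 h3)) hxn hyn hzn
  have hfl : (⌊X * l ^ 2⌋₊ : ℝ) ≤ X * l ^ 2 := Nat.floor_le (by positivity)
  have hgapR : 4 * (M : ℝ) ≤ 9 * (X * l ^ 2) ^ 2 := by
    have h1 : 4 * (M : ℝ) ≤ 9 * (⌊X * l ^ 2⌋₊ : ℝ) ^ 2 := by exact_mod_cast hgap
    refine h1.trans ?_
    gcongr
  obtain ⟨hξ, hl3⟩ := ExpSum.numerics M X hX hmax hgapR
  exact ExpSum.no_large_height a b c p₀.1 p₀.2.1 p₀.2.2 (Real.log X) ha2 hb2 hc2 hab hac hbc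
    hx₀ hy₀ hz₀ heq₀ hξ (haM.trans hl3) (hbM.trans hl3) (hcM.trans hl3)
    (by rw [Real.exp_log hX]; exact hH)
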